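/- arXiv:math/0702033 — 2 statements merged into one kernel-verified Lean document; each statement's English description precedes it below -/
import Mathlib

section
/- Let φ(·,ξ) be the solution of −φ'' − 5(1+R²/3)^{−2} φ = ξφ with φ(0,ξ)=0, ∂_Rφ(0,ξ)=1, and let f₊(·,ξ) be the Jost solution, f₋ := conj(f₊). Then for every ξ > 0: (i) the Wronskian W(f₊(·,ξ), f₋(·,ξ)) = f₊ ∂_R f₋ − (∂_R f₊) f₋ equals −2i√ξ; (ii) with a(ξ) := W(φ(·,ξ), f₋(·,ξ)) / (−2i√ξ) one has a(ξ) ≠ 0 and the connection formula φ(R,ξ) = a(ξ) f₊(R,ξ) + conj(a(ξ)) f₋(R,ξ) for all R > 0; (iii) there are constants 0 < c ≤ C such that c ≤ |a(ξ)| ≤ C for 0 < ξ ≤ 1 and c ξ^{−1/2} ≤ |a(ξ)| ≤ C ξ^{−1/2} for ξ ≥ 1; consequently the spectral density ρ(ξ) := (4π √ξ |a(ξ)|²)^{−1} satisfies ρ(ξ) ≍ ξ^{−1/2} as ξ → 0 and ρ(ξ) ≍ ξ^{1/2} as ξ → ∞. -/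
/-! Write `ξ = k²`, and let `u` be the regular solution at energy `k²`.

Since `g = f₊ e^{-ikR}` converges and `g'' + 2ik g' = -q g → 0`, a Tauberian argument gives
`g' → 0`, that is, `f₊' - ik f₊ → 0`. This evaluates `W(f₊, f₋)` at infinity, and the connection
formula is then linear algebra. It also shows that the energy `u'² + k² u²` tends to `4k² |a|²`.

The size of `a` is therefore the size of the energy at infinity. The energy changes only through
the potential: its logarithmic derivative is at most `|q| / k ≤ (M / k) (1 + R²)⁻¹`. For `k ≥ 1`
the resulting bound from `R = 0` to `R = ∞` is uniform in `k`, and the energy starts from `1`. For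
`k ≤ 1` the bound is uniform only from `R = k⁻¹` on. On `[0, k⁻¹]` the solution `u` is expanded in
two zero-energy solutions instead: the regular one is bounded (a zero-energy resonance), hence `u`
and `R u'` have size `1` at `R = k⁻¹`, and the energy there has size `k²`.
-/

open Filter Topology ComplexConjugate

noncomputable section

namespace ConnectionCoefficient

section Development

open Set Asymptotics

/-! ### Two-sided bounds -/

/-- `x` and `y` agree up to the factor `K` in both directions; for nonnegative quantities this is
`x ≍ y` with an explicit constant. -/
def ComparableWith (K x y : ℝ) : Prop :=
  x ≤ K * y ∧ y ≤ K * x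

namespace ComparableWith

variable {K K' x y z : ℝ}

lemma trans (h : ComparableWith K x y) (h' : ComparableWith K' y z) (hK : 0 ≤ K) (hK' : 0 ≤ K') :
    ComparableWith (K * K') x z := by
  constructor
  · calc x ≤ K * y := h.1
      _ ≤ K * (K' * z) := by gcongr; exact h'.1
      _ = K * K' * z := by ring
  · calc z ≤ K' * y := h'.2
      _ ≤ K' * (K * x) := by gcongr; exact h.2
      _ = K * K' * x := by ring

lemma mono (h : ComparableWith K x y) (hK : K ≤ K') (hx : 0 ≤ x) (hy : 0 ≤ y) :
    ComparableWith K' x y :=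
  ⟨h.1.trans (by gcongr), h.2.trans (by gcongr)⟩

lemma const_mul (h : ComparableWith K x y) {c : ℝ} (hc : 0 ≤ c) :
    ComparableWith K (c * x) (c * y) :=
  ⟨(mul_le_mul_of_nonneg_left h.1 hc).trans_eq (by ring),
    (mul_le_mul_of_nonneg_left h.2 hc).trans_eq (by ring)⟩

lemma of_const_mul {c : ℝ} (h : ComparableWith K (c * x) (c * y)) (hc : 0 < c) :
    ComparableWith K x y := by
  simpa [hc.ne'] using h.const_mul (inv_nonneg.2 hc.le)

lemma inv_mul_le_and_le_mul (h : ComparableWith K x y) (hK : 0 < K) : K⁻¹ * y ≤ x ∧ x ≤ K * y :=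
  ⟨(inv_mul_le_iff₀ hK).2 h.2, h.1⟩

lemma of_sq (h : ComparableWith K (x ^ 2) (y ^ 2)) (hx : 0 ≤ x) (hy : 0 ≤ y) :
    ComparableWith √K x y := by
  have le_sqrt_mul {a b : ℝ} (hb : 0 ≤ b) (hab : a ^ 2 ≤ K * b ^ 2) : a ≤ √K * b := by
    rw [← Real.sqrt_sq hb, ← Real.sqrt_mul' K (sq_nonneg b)]
    exact Real.le_sqrt_of_sq_le hab
  exact ⟨le_sqrt_mul hy h.1, le_sqrt_mul hx h.2⟩

lemma of_tendsto {ι : Type*} {l : Filter ι} [l.NeBot] {F : ι → ℝ} (hF : Tendsto F l (𝓝 x))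
    (h : ∀ᶠ i in l, ComparableWith K (F i) y) : ComparableWith K x y :=
  ⟨le_of_tendsto hF (h.mono fun _ hi ↦ hi.1),
    ge_of_tendsto (hF.const_mul K) (h.mono fun _ hi ↦ hi.2)⟩

end ComparableWith

lemma isTheta_principal_iff {α E F : Type*} [SeminormedAddCommGroup E] [SeminormedAddCommGroup F]
    {f : α → E} {g : α → F} {s : Set α} :
    f =Θ[𝓟 s] g ↔ ∀ᶠ K in atTop, ∀ x ∈ s, ComparableWith K ‖f x‖ ‖g x‖ := by
  simp only [IsTheta, isBigO_iff_eventually_isBigOWith, isBigOWith_principal, ComparableWith,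
    ← eventually_and, forall_and]

lemma isTheta_principal_of_comparableWith {α E F : Type*} [SeminormedAddCommGroup E]
    [SeminormedAddCommGroup F] {f : α → E} {g : α → F} {s : Set α} {K : ℝ}
    (h : ∀ x ∈ s, ComparableWith K ‖f x‖ ‖g x‖) : f =Θ[𝓟 s] g :=
  isTheta_principal_iff.2 <| (eventually_ge_atTop K).mono fun _ hK x hx ↦
    (h x hx).mono hK (norm_nonneg _) (norm_nonneg _)

lemma abs_two_mul_mul_le_add_sq (x y : ℝ) : |2 * (x * y)| ≤ x ^ 2 + y ^ 2 :=
  abs_le.2 ⟨by linarith [sq_nonneg (x + y)], by linarith [sq_nonneg (x - y)]⟩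

/-- A matrix of determinant `±1` and its inverse have the same Frobenius norm. -/
lemma comparableWith_sq_add_sq_of_det {a b c d : ℝ} (h : (a * d - b * c) ^ 2 = 1) (x y : ℝ) :
    ComparableWith (a ^ 2 + b ^ 2 + c ^ 2 + d ^ 2)
      ((a * x + b * y) ^ 2 + (c * x + d * y) ^ 2) (x ^ 2 + y ^ 2) := by
  have frobenius (a b c d x y : ℝ) : (a * x + b * y) ^ 2 + (c * x + d * y) ^ 2
      ≤ (a ^ 2 + b ^ 2 + c ^ 2 + d ^ 2) * (x ^ 2 + y ^ 2) := by
    linarith [sq_nonneg (a * y - b * x), sq_nonneg (c * y - d * x)]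
  refine ⟨frobenius a b c d x y, ?_⟩
  set X := a * x + b * y with hX
  set Y := c * x + d * y with hY
  calc x ^ 2 + y ^ 2 = (a * d - b * c) ^ 2 * (x ^ 2 + y ^ 2) := by rw [h, one_mul]
    _ = (d * X + -b * Y) ^ 2 + (-c * X + a * Y) ^ 2 := by rw [hX, hY]; ring
    _ ≤ (d ^ 2 + (-b) ^ 2 + (-c) ^ 2 + a ^ 2) * (X ^ 2 + Y ^ 2) := frobenius ..
    _ = (a ^ 2 + b ^ 2 + c ^ 2 + d ^ 2) * (X ^ 2 + Y ^ 2) := by ring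

lemma le_exp_mul_of_deriv_le {E E' Q Q' : ℝ → ℝ} {a b : ℝ} (hab : a ≤ b)
    (hE : ∀ x ∈ Icc a b, HasDerivAt E (E' x) x) (hQ : ∀ x ∈ Icc a b, HasDerivAt Q (Q' x) x)
    (h : ∀ x ∈ Icc a b, E' x ≤ Q' x * E x) :
    E b ≤ Real.exp (Q b - Q a) * E a := by
  have hder (x) (hx : x ∈ Icc a b) : HasDerivAt (fun x ↦ E x * Real.exp (-Q x))
      (E' x * Real.exp (-Q x) + E x * (Real.exp (-Q x) * -Q' x)) x :=
    (hE x hx).mul (hQ x hx).neg.exp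
  have hanti : AntitoneOn (fun x ↦ E x * Real.exp (-Q x)) (Icc a b) := by
    refine antitoneOn_of_hasDerivWithinAt_nonpos (convex_Icc a b)
      (fun x hx ↦ (hder x hx).continuousAt.continuousWithinAt)
      (fun x hx ↦ (hder x (interior_subset hx)).hasDerivWithinAt) fun x hx ↦ ?_
    linarith [mul_le_mul_of_nonneg_right (h x (interior_subset hx)) (Real.exp_pos (-Q x)).le]
  calc E b = Real.exp (Q b) * (E b * Real.exp (-Q b)) := by
        rw [mul_left_comm, ← Real.exp_add, add_neg_cancel, Real.exp_zero, mul_one]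
    _ ≤ Real.exp (Q b) * (E a * Real.exp (-Q a)) := by
        refine mul_le_mul_of_nonneg_left ?_ (Real.exp_pos _).le
        exact hanti (left_mem_Icc.2 hab) (right_mem_Icc.2 hab) hab
    _ = Real.exp (Q b - Q a) * E a := by rw [sub_eq_add_neg, Real.exp_add]; ring

lemma comparableWith_exp_of_abs_deriv_le {E E' Q Q' : ℝ → ℝ} {a b : ℝ} (hab : a ≤ b)
    (hE : ∀ x ∈ Icc a b, HasDerivAt E (E' x) x) (hQ : ∀ x ∈ Icc a b, HasDerivAt Q (Q' x) x)
    (h : ∀ x ∈ Icc a b, |E' x| ≤ Q' x * E x) :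
    ComparableWith (Real.exp (Q b - Q a)) (E b) (E a) := by
  refine ⟨le_exp_mul_of_deriv_le hab hE hQ fun x hx ↦ (abs_le.1 (h x hx)).2, ?_⟩
  have hneg : -E b ≤ Real.exp (-Q b - -Q a) * -E a :=
    le_exp_mul_of_deriv_le hab (fun x hx ↦ (hE x hx).neg) (fun x hx ↦ (hQ x hx).neg)
      fun x hx ↦ show -E' x ≤ -Q' x * -E x by linarith [(abs_le.1 (h x hx)).1]
  calc E a = Real.exp (Q b - Q a) * (Real.exp (-Q b - -Q a) * E a) := by
        rw [← mul_assoc, ← Real.exp_add]; simp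
    _ ≤ Real.exp (Q b - Q a) * E b := by gcongr; linarith

/-! ### A Tauberian lemma -/

/-- `G` varies slowly at infinity: `G (R + s) - G R → 0` as `R → ∞`, uniformly in `s ∈ [0, 1]`. -/
def SlowlyVarying {E : Type*} [NormedAddCommGroup E] (G : ℝ → E) : Prop :=
  Tendsto (fun x : ℝ × ℝ ↦ G (x.1 + x.2) - G x.1) (atTop ×ˢ 𝓟 (Icc 0 1)) (𝓝 0)

section Tauberian

variable {E : Type*} [NormedAddCommGroup E] {G G' : ℝ → E}

lemma slowlyVarying_iff :
    SlowlyVarying G ↔ ∀ ε > 0, ∀ᶠ R in atTop, ∀ s ∈ Icc (0 : ℝ) 1, ‖G (R + s) - G R‖ ≤ ε := by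
  simp only [SlowlyVarying, Metric.nhds_basis_closedBall.tendsto_right_iff,
    eventually_prod_principal_iff, mem_closedBall_zero_iff]

lemma SlowlyVarying.of_tendsto {l : E} (h : Tendsto G atTop (𝓝 l)) : SlowlyVarying G := by
  have hadd : Tendsto (fun x : ℝ × ℝ ↦ x.1 + x.2) (atTop ×ˢ 𝓟 (Icc 0 1)) atTop :=
    tendsto_atTop_add_right_of_le' _ 0 tendsto_fst
      (eventually_prod_principal_iff.2 (.of_forall fun _ _ hs ↦ hs.1))
  simpa [SlowlyVarying] using (h.comp hadd).sub (h.comp tendsto_fst)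

variable [NormedSpace ℝ E]

lemma SlowlyVarying.of_tendsto_deriv (hG : ∀ᶠ R in atTop, HasDerivAt G (G' R) R)
    (h : Tendsto G' atTop (𝓝 0)) : SlowlyVarying G := by
  refine slowlyVarying_iff.2 fun ε hε ↦ ?_
  have hsmall : ∀ᶠ R in atTop, ‖G' R‖ ≤ ε :=
    (tendsto_zero_iff_norm_tendsto_zero.1 h).eventually_le_const hε
  filter_upwards [eventually_forall_ge_atTop.2 (hG.and hsmall)] with R hR s hs
  calc ‖G (R + s) - G R‖ ≤ ε * (R + s - R) :=
        norm_image_sub_le_of_norm_deriv_le_segment'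
          (fun x hx ↦ (hR x hx.1).1.hasDerivWithinAt) (fun x hx ↦ (hR x hx.1).2) _
          ⟨by linarith [hs.1], le_rfl⟩
    _ ≤ ε := by rw [add_sub_cancel_left]; exact mul_le_of_le_one_right hε.le hs.2

lemma SlowlyVarying.tendsto_deriv_zero {l : E} (hG : ∀ᶠ R in atTop, HasDerivAt G (G' R) R)
    (hl : Tendsto G atTop (𝓝 l)) (h : SlowlyVarying G') : Tendsto G' atTop (𝓝 0) := by
  have hdiff : Tendsto (fun R ↦ G (R + 1) - G R) atTop (𝓝 0) := by
    simpa using (hl.comp (tendsto_atTop_add_const_right _ 1 tendsto_id)).sub hl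
  have herr : Tendsto (fun R ↦ G (R + 1) - G R - G' R) atTop (𝓝 0) := by
    refine Metric.nhds_basis_closedBall.tendsto_right_iff.2 fun ε hε ↦ ?_
    filter_upwards [eventually_forall_ge_atTop.2 hG, slowlyVarying_iff.1 h ε hε] with R hR hosc
    have hder (x) (hx : x ∈ Icc R (R + 1)) :
        HasDerivWithinAt (fun x ↦ G x - x • G' R) (G' x - G' R) (Icc R (R + 1)) x := by
      simpa using ((hR x hx.1).fun_sub ((hasDerivAt_id x).smul_const (G' R))).hasDerivWithinAt
    have hmean := norm_image_sub_le_of_norm_deriv_le_segment' hder (C := ε)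
      (fun x hx ↦ by simpa using hosc (x - R) ⟨by linarith [hx.1], by linarith [hx.2]⟩)
      (R + 1) ⟨by linarith, le_rfl⟩
    rw [mem_closedBall_zero_iff]
    calc ‖G (R + 1) - G R - G' R‖ = ‖G (R + 1) - (R + 1) • G' R - (G R - R • G' R)‖ := by
          congr 1; module
      _ ≤ ε := by linarith
  simpa using hdiff.sub herr

end Tauberian

lemma tendsto_deriv_zero_of_tendsto_deriv_deriv_add {A : Type*} [NormedRing A] [NormedAlgebra ℝ A]
    {G G' G'' : ℝ → A} {c l : A} (hG : ∀ᶠ R in atTop, HasDerivAt G (G' R) R)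
    (hG' : ∀ᶠ R in atTop, HasDerivAt G' (G'' R) R) (hl : Tendsto G atTop (𝓝 l))
    (h : Tendsto (fun R ↦ G'' R + c * G' R) atTop (𝓝 0)) : Tendsto G' atTop (𝓝 0) := by
  have hsum : SlowlyVarying (fun R ↦ G' R + c * G R) :=
    .of_tendsto_deriv ((hG.and hG').mono fun R hR ↦ hR.2.add (hR.1.const_mul c)) h
  have hG'_slow : SlowlyVarying G' := by
    have := Tendsto.sub hsum (SlowlyVarying.of_tendsto (hl.const_mul c))
    simp only [sub_zero] at this
    exact this.congr fun x ↦ by abel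
  exact hG'_slow.tendsto_deriv_zero hG hl


/-! ### Solutions and Wronskians -/

/-- `u` solves `-u'' - q u = k² u` on `s`. -/
structure IsSolutionOn {E : Type*} [NormedAddCommGroup E] [NormedSpace ℝ E] (q : ℝ → ℝ) (k : ℝ)
    (u : ℝ → E) (s : Set ℝ) : Prop where
  hasDerivAt : ∀ R ∈ s, HasDerivAt u (deriv u R) R
  hasDerivAt_deriv : ∀ R ∈ s, HasDerivAt (deriv u) (-((k ^ 2 + q R) • u R)) R

/-- The Wronskian `W(u, v) = u v' - u' v`. -/
def wronskian {A : Type*} [NormedRing A] [NormedAlgebra ℝ A] (u v : ℝ → A) (R : ℝ) : A :=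
  u R * deriv v R - deriv u R * v R

namespace IsSolutionOn

section

variable {E F : Type*} [NormedAddCommGroup E] [NormedSpace ℝ E] [NormedAddCommGroup F]
  [NormedSpace ℝ F] {q : ℝ → ℝ} {k : ℝ} {u : ℝ → E} {s t : Set ℝ}

lemma mono (hu : IsSolutionOn q k u s) (hts : t ⊆ s) : IsSolutionOn q k u t :=
  ⟨fun R hR ↦ hu.hasDerivAt R (hts hR), fun R hR ↦ hu.hasDerivAt_deriv R (hts hR)⟩

lemma deriv_clm_comp (hu : IsSolutionOn q k u s) (L : E →L[ℝ] F) {R : ℝ} (hR : R ∈ s) :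
    deriv (fun R ↦ L (u R)) R = L (deriv u R) :=
  (L.hasFDerivAt.comp_hasDerivAt R (hu.hasDerivAt R hR)).deriv

lemma clm_comp (hu : IsSolutionOn q k u s) (L : E →L[ℝ] F) (hs : IsOpen s) :
    IsSolutionOn q k (fun R ↦ L (u R)) s where
  hasDerivAt R hR := by
    rw [hu.deriv_clm_comp L hR]
    exact L.hasFDerivAt.comp_hasDerivAt R (hu.hasDerivAt R hR)
  hasDerivAt_deriv R hR := by
    have h : HasDerivAt (fun R ↦ L (deriv u R)) (L (-((k ^ 2 + q R) • u R))) R :=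
      L.hasFDerivAt.comp_hasDerivAt R (hu.hasDerivAt_deriv R hR)
    rw [map_neg, map_smul] at h
    refine h.congr_of_eventuallyEq ?_
    filter_upwards [hs.mem_nhds hR] with x hx using hu.deriv_clm_comp L hx

end

variable {A : Type*} [NormedCommRing A] [NormedAlgebra ℝ A] {q : ℝ → ℝ} {k m : ℝ} {u v : ℝ → A}
  {s : Set ℝ}

lemma hasDerivAt_wronskian (hu : IsSolutionOn q k u s) (hv : IsSolutionOn q m v s) {R : ℝ}
    (hR : R ∈ s) :
    HasDerivAt (wronskian u v) ((k ^ 2 - m ^ 2) • (u R * v R)) R := by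
  refine (((hu.hasDerivAt R hR).mul (hv.hasDerivAt_deriv R hR)).sub
    ((hu.hasDerivAt_deriv R hR).mul (hv.hasDerivAt R hR))).congr_deriv ?_
  simp only [mul_neg, neg_mul, mul_smul_comm, smul_mul_assoc]
  module

lemma wronskian_eq (hu : IsSolutionOn q k u s) (hv : IsSolutionOn q k v s) (hs : IsOpen s)
    (hs' : IsPreconnected s) {x y : ℝ} (hx : x ∈ s) (hy : y ∈ s) :
    wronskian u v x = wronskian u v y := by
  have hder (R) (hR : R ∈ s) : HasDerivAt (wronskian u v) 0 R := by
    simpa using hu.hasDerivAt_wronskian hv hR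
  exact hs.is_const_of_deriv_eq_zero hs'
    (fun R hR ↦ (hder R hR).differentiableAt.differentiableWithinAt)
    (fun R hR ↦ (hder R hR).deriv) hx hy

end IsSolutionOn

/-! ### The Jost solution and the connection formula -/

/-- The incoming plane wave `e^{-ikR}`. -/
def planeWave (k R : ℝ) : ℂ :=
  Complex.exp (-Complex.I * (R : ℂ) * (k : ℂ))

lemma norm_planeWave (k R : ℝ) : ‖planeWave k R‖ = 1 := by
  simp [planeWave, Complex.norm_exp]

lemma hasDerivAt_planeWave (k R : ℝ) :
    HasDerivAt (planeWave k) (planeWave k R * (-Complex.I * k)) R := by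
  unfold planeWave
  simpa using
    ((((hasDerivAt_id R).ofReal_comp).const_mul (-Complex.I)).mul_const (k : ℂ)).cexp

/-- `f` is the Jost solution `f₊` at frequency `k`, i.e. at energy `ξ = k²`. -/
structure IsJostSolution (q : ℝ → ℝ) (k : ℝ) (f : ℝ → ℂ) : Prop where
  isSolutionOn : IsSolutionOn q k f (Ioi 0)
  tendsto : Tendsto (fun R ↦ f R * planeWave k R) atTop (𝓝 1)

/-- `u` is the regular solution `φ` at frequency `k`, i.e. at energy `ξ = k²`. -/
structure IsRegularSolution (q : ℝ → ℝ) (k : ℝ) (u : ℝ → ℝ) : Prop where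
  isSolutionOn : IsSolutionOn q k u (Ici 0)
  apply_zero : u 0 = 0
  deriv_zero : deriv u 0 = 1

/-- The connection coefficient `a = W(φ, f₋) / (-2ik)`, with the Wronskian, which does not depend
on `R`, evaluated at `R = 1`. -/
def connectionCoeff (k : ℝ) (u : ℝ → ℝ) (f : ℝ → ℂ) : ℂ :=
  wronskian (fun R ↦ (u R : ℂ)) (fun R ↦ conj (f R)) 1 / (-2 * Complex.I * k)

namespace IsJostSolution

variable {q : ℝ → ℝ} {k R : ℝ} {f : ℝ → ℂ}

lemma isSolutionOn_conj (hf : IsJostSolution q k f) :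
    IsSolutionOn q k (fun R ↦ conj (f R)) (Ioi 0) :=
  hf.isSolutionOn.clm_comp Complex.conjCLE.toContinuousLinearMap isOpen_Ioi

lemma wronskian_conj_right (hf : IsJostSolution q k f) (g : ℝ → ℂ) (hR : 0 < R) :
    wronskian g (fun R ↦ conj (f R)) R = g R * conj (deriv f R) - deriv g R * conj (f R) := by
  have hderiv : deriv (fun R ↦ conj (f R)) R = conj (deriv f R) :=
    hf.isSolutionOn.deriv_clm_comp Complex.conjCLE.toContinuousLinearMap hR
  rw [wronskian, hderiv]

lemma tendsto_norm (hf : IsJostSolution q k f) : Tendsto (fun R ↦ ‖f R‖) atTop (𝓝 1) := by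
  simpa [norm_planeWave] using hf.tendsto.norm

/-- `g = f e^{-ikR}` satisfies `g'' + 2ik g' = -q g → 0`. -/
lemma tendsto_deriv_sub (hf : IsJostSolution q k f) (hq : Tendsto q atTop (𝓝 0)) :
    Tendsto (fun R ↦ deriv f R - Complex.I * k * f R) atTop (𝓝 0) := by
  have hg (R : ℝ) (hR : 0 < R) : HasDerivAt (fun R ↦ f R * planeWave k R)
      ((deriv f R - Complex.I * k * f R) * planeWave k R) R :=
    ((hf.isSolutionOn.hasDerivAt R hR).mul (hasDerivAt_planeWave k R)).congr_deriv (by ring)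
  have hg' (R : ℝ) (hR : 0 < R) :
      HasDerivAt (fun R ↦ (deriv f R - Complex.I * k * f R) * planeWave k R)
        (-(q R * (f R * planeWave k R))
          - 2 * Complex.I * k * ((deriv f R - Complex.I * k * f R) * planeWave k R)) R := by
    refine (((hf.isSolutionOn.hasDerivAt_deriv R hR).sub
      ((hf.isSolutionOn.hasDerivAt R hR).const_mul (Complex.I * k))).mul
      (hasDerivAt_planeWave k R)).congr_deriv ?_
    simp only [Pi.sub_apply, Complex.real_smul]
    push_cast
    linear_combination (-(k : ℂ) ^ 2 * f R * planeWave k R) * Complex.I_sq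
  have hqg : Tendsto (fun R ↦ -((q R : ℂ) * (f R * planeWave k R))) atTop (𝓝 0) := by
    simpa using ((Complex.continuous_ofReal.tendsto 0).comp hq |>.mul hf.tendsto).neg
  have hlim := tendsto_deriv_zero_of_tendsto_deriv_deriv_add (c := 2 * Complex.I * k)
    ((eventually_gt_atTop 0).mono hg) ((eventually_gt_atTop 0).mono hg') hf.tendsto
    (hqg.congr fun R ↦ by ring)
  rw [tendsto_zero_iff_norm_tendsto_zero] at hlim ⊢
  simpa [norm_planeWave] using hlim

theorem wronskian_conj (hf : IsJostSolution q k f) (hq : Tendsto q atTop (𝓝 0)) (hR : 0 < R) :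
    wronskian f (fun R ↦ conj (f R)) R = -2 * Complex.I * k := by
  set d : ℝ → ℂ := fun R ↦ deriv f R - Complex.I * k * f R with hd
  have hfd : Tendsto (fun R ↦ f R * conj (d R)) atTop (𝓝 0) := by
    rw [tendsto_zero_iff_norm_tendsto_zero]
    simpa using hf.tendsto_norm.mul (hf.tendsto_deriv_sub hq).norm
  have hnorm : Tendsto (fun R ↦ (‖f R‖ : ℂ) ^ 2) atTop (𝓝 1) := by
    simpa using ((Complex.continuous_ofReal.tendsto 1).comp hf.tendsto_norm).pow 2
  have hlim : Tendsto (fun R ↦ f R * conj (d R) - conj (f R * conj (d R))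
      - 2 * Complex.I * k * (‖f R‖ : ℂ) ^ 2) atTop (𝓝 (-2 * Complex.I * k)) := by
    simpa using (hfd.sub ((Complex.continuous_conj.tendsto 0).comp hfd)).sub
      (hnorm.const_mul (2 * Complex.I * k))
  refine tendsto_nhds_unique (tendsto_const_nhds.congr' ?_) hlim
  filter_upwards [eventually_gt_atTop 0] with x hx
  rw [hf.isSolutionOn.wronskian_eq hf.isSolutionOn_conj isOpen_Ioi isPreconnected_Ioi hR hx,
    hf.wronskian_conj_right f hx, ← Complex.mul_conj']
  simp only [hd, map_sub, map_mul, map_neg, Complex.conj_conj, Complex.conj_I, Complex.conj_ofReal]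
  ring

end IsJostSolution

section ConnectionFormula

variable {q : ℝ → ℝ} {k R : ℝ} {u : ℝ → ℝ} {f : ℝ → ℂ}

lemma wronskian_ofReal_conj (hu : IsSolutionOn q k u (Ioi 0)) (hf : IsJostSolution q k f)
    (hR : 0 < R) :
    wronskian (fun R ↦ (u R : ℂ)) (fun R ↦ conj (f R)) R
      = u R * conj (deriv f R) - (deriv u R : ℝ) * conj (f R) := by
  have hderiv : deriv (fun R ↦ (u R : ℂ)) R = (deriv u R : ℝ) :=
    hu.deriv_clm_comp Complex.ofRealCLM hR
  rw [hf.wronskian_conj_right _ hR, hderiv]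

theorem wronskian_eq_mul_connectionCoeff (hu : IsSolutionOn q k u (Ioi 0))
    (hf : IsJostSolution q k f) (hk : k ≠ 0) (hR : 0 < R) :
    (u R : ℂ) * conj (deriv f R) - (deriv u R : ℝ) * conj (f R)
      = -2 * Complex.I * k * connectionCoeff k u f := by
  have hu' : IsSolutionOn q k (fun R ↦ (u R : ℂ)) (Ioi 0) :=
    hu.clm_comp Complex.ofRealCLM isOpen_Ioi
  rw [connectionCoeff, mul_div_cancel₀ _ (by simpa using hk), ← wronskian_ofReal_conj hu hf hR]
  exact hu'.wronskian_eq hf.isSolutionOn_conj isOpen_Ioi isPreconnected_Ioi hR (mem_Ioi.2 one_pos)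

lemma wronskian_eq_mul_conj_connectionCoeff (hu : IsSolutionOn q k u (Ioi 0))
    (hf : IsJostSolution q k f) (hk : k ≠ 0) (hR : 0 < R) :
    (u R : ℂ) * deriv f R - (deriv u R : ℝ) * f R
      = 2 * Complex.I * k * conj (connectionCoeff k u f) := by
  simpa [map_ofNat] using congrArg conj (wronskian_eq_mul_connectionCoeff hu hf hk hR)

/-- The identity `W(f₊, f₋) x = W(x, f₋) f₊ - W(x, f₊) f₋` for a coordinate `x` of the phase
vector `(u, u')`. -/
theorem eq_connectionCoeff_mul_add (hu : IsSolutionOn q k u (Ioi 0)) (hf : IsJostSolution q k f)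
    (hq : Tendsto q atTop (𝓝 0)) (hk : k ≠ 0) (hR : 0 < R) :
    (u R : ℂ) = connectionCoeff k u f * f R + conj (connectionCoeff k u f) * conj (f R) := by
  have hW := hf.wronskian_conj hq hR
  rw [hf.wronskian_conj_right f hR] at hW
  refine mul_left_cancel₀ (by simpa using hk : -2 * Complex.I * (k : ℂ) ≠ 0) ?_
  linear_combination (-(u R : ℂ)) * hW + f R * wronskian_eq_mul_connectionCoeff hu hf hk hR
    - conj (f R) * wronskian_eq_mul_conj_connectionCoeff hu hf hk hR

theorem deriv_eq_connectionCoeff_mul_add (hu : IsSolutionOn q k u (Ioi 0))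
    (hf : IsJostSolution q k f) (hq : Tendsto q atTop (𝓝 0)) (hk : k ≠ 0) (hR : 0 < R) :
    ((deriv u R : ℝ) : ℂ) = connectionCoeff k u f * deriv f R
      + conj (connectionCoeff k u f) * conj (deriv f R) := by
  have hW := hf.wronskian_conj hq hR
  rw [hf.wronskian_conj_right f hR] at hW
  refine mul_left_cancel₀ (by simpa using hk : -2 * Complex.I * (k : ℂ) ≠ 0) ?_
  linear_combination (-((deriv u R : ℝ) : ℂ)) * hW
    + deriv f R * wronskian_eq_mul_connectionCoeff hu hf hk hR
    - conj (deriv f R) * wronskian_eq_mul_conj_connectionCoeff hu hf hk hR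

/-! ### The energy -/

/-- The energy `u'² + k² u²`, conserved by the free equation `-u'' = k² u`. -/
def energy (k : ℝ) (u : ℝ → ℝ) (R : ℝ) : ℝ :=
  deriv u R ^ 2 + k ^ 2 * u R ^ 2

lemma energy_nonneg (k : ℝ) (u : ℝ → ℝ) (R : ℝ) : 0 ≤ energy k u R := by
  unfold energy
  positivity

theorem tendsto_energy (hu : IsSolutionOn q k u (Ioi 0)) (hf : IsJostSolution q k f)
    (hq : Tendsto q atTop (𝓝 0)) (hk : 0 < k) :
    Tendsto (energy k u) atTop (𝓝 ((2 * k * ‖connectionCoeff k u f‖) ^ 2)) := by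
  set a := connectionCoeff k u f
  set d : ℝ → ℂ := fun R ↦ deriv f R - Complex.I * k * f R with hd
  have hd0 : Tendsto d atTop (𝓝 0) := hf.tendsto_deriv_sub hq
  -- The plane wave turns the oscillating `u' + iku = 2ik a f + a d + conj (a d)` into a
  -- convergent function, without changing its modulus.
  have hrest : Tendsto (fun R ↦ (a * d R + conj (a * d R)) * planeWave k R) atTop (𝓝 0) := by
    rw [tendsto_zero_iff_norm_tendsto_zero]
    have had : Tendsto (fun R ↦ a * d R) atTop (𝓝 0) := by simpa using hd0.const_mul a
    simpa [norm_planeWave] using (had.add ((Complex.continuous_conj.tendsto 0).comp had)).norm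
  have hlim : Tendsto (fun R ↦ 2 * Complex.I * k * a * (f R * planeWave k R)
      + (a * d R + conj (a * d R)) * planeWave k R) atTop (𝓝 (2 * Complex.I * k * a)) := by
    simpa using (hf.tendsto.const_mul (2 * Complex.I * k * a)).add hrest
  have hnorm : ‖2 * Complex.I * k * a‖ = 2 * k * ‖a‖ := by simp [abs_of_pos hk]
  rw [← hnorm]
  refine (hlim.norm.pow 2).congr' ?_
  filter_upwards [eventually_gt_atTop 0] with R hR
  have hphase : (deriv u R : ℝ) + Complex.I * k * u R
      = 2 * Complex.I * k * a * f R + (a * d R + conj (a * d R)) := by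
    rw [deriv_eq_connectionCoeff_mul_add hu hf hq hk.ne' hR,
      eq_connectionCoeff_mul_add hu hf hq hk.ne' hR]
    simp only [hd, map_sub, map_mul, Complex.conj_I, Complex.conj_ofReal]
    ring
  have hsq : energy k u R = Complex.normSq ((deriv u R : ℝ) + Complex.I * k * u R) := by
    simp only [energy, Complex.normSq_apply, Complex.add_re, Complex.add_im, Complex.re_mul_ofReal,
      Complex.im_mul_ofReal, Complex.ofReal_re, Complex.ofReal_im, Complex.I_re, Complex.I_im]
    ring
  rw [← mul_assoc, ← add_mul, ← hphase, norm_mul, norm_planeWave, mul_one,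
    ← Complex.normSq_eq_norm_sq, hsq]

lemma IsSolutionOn.hasDerivAt_energy {s : Set ℝ} (hu : IsSolutionOn q k u s) (hR : R ∈ s) :
    HasDerivAt (energy k u) (-(2 * q R * (u R * deriv u R))) R :=
  (((hu.hasDerivAt_deriv R hR).pow 2).add
    (((hu.hasDerivAt R hR).pow 2).const_mul (k ^ 2))).congr_deriv (by simp only [smul_eq_mul]; ring)

lemma abs_two_mul_mul_deriv_le (hk : 0 < k) (u : ℝ → ℝ) (R : ℝ) :
    |2 * (u R * deriv u R)| ≤ energy k u R / k := by
  rw [le_div_iff₀ hk]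
  calc |2 * (u R * deriv u R)| * k = |2 * (deriv u R * (k * u R))| := by
        rw [← abs_of_pos hk, ← abs_mul, abs_of_pos hk]; ring_nf
    _ ≤ deriv u R ^ 2 + (k * u R) ^ 2 := abs_two_mul_mul_le_add_sq ..
    _ = energy k u R := by rw [energy, mul_pow]

/-- `arctan` is a primitive of the majorant `(1 + R²)⁻¹` of the potential. -/
lemma comparableWith_energy {a b M : ℝ} (hu : IsSolutionOn q k u (Ici a)) (hk : 0 < k)
    (hq : ∀ R ∈ Ici a, |q R| ≤ M / (1 + R ^ 2)) (hab : a ≤ b) :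
    ComparableWith (Real.exp (M / k * (Real.arctan b - Real.arctan a)))
      (energy k u b) (energy k u a) := by
  rw [mul_sub]
  refine comparableWith_exp_of_abs_deriv_le hab (fun x hx ↦ hu.hasDerivAt_energy hx.1)
    (fun x _ ↦ (Real.hasDerivAt_arctan x).const_mul (M / k)) fun x hx ↦ ?_
  calc |-(2 * q x * (u x * deriv u x))| = |q x| * |2 * (u x * deriv u x)| := by
        rw [abs_neg, ← abs_mul]; ring_nf
    _ ≤ M / (1 + x ^ 2) * (energy k u x / k) :=
        mul_le_mul (hq x hx.1) (abs_two_mul_mul_deriv_le hk u x) (abs_nonneg _)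
          ((abs_nonneg _).trans (hq x hx.1))
    _ = M / k * (1 / (1 + x ^ 2)) * energy k u x := by ring

lemma nonneg_of_abs_le_div_one_add_sq {M : ℝ} (hq : ∀ R ∈ Ici 0, |q R| ≤ M / (1 + R ^ 2)) :
    0 ≤ M := by
  simpa using (abs_nonneg (q 0)).trans (hq 0 self_mem_Ici)

lemma tendsto_zero_of_abs_le_div_one_add_sq {M : ℝ}
    (hq : ∀ R ∈ Ici 0, |q R| ≤ M / (1 + R ^ 2)) : Tendsto q atTop (𝓝 0) := by
  have hM : Tendsto (fun R : ℝ ↦ M / (1 + R ^ 2)) atTop (𝓝 0) :=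
    tendsto_const_nhds.div_atTop
      (tendsto_atTop_add_const_left _ 1 (tendsto_pow_atTop two_ne_zero))
  exact squeeze_zero_norm' ((eventually_ge_atTop 0).mono hq) hM

theorem comparableWith_connectionCoeff_energy {a M : ℝ} (hu : IsSolutionOn q k u (Ici 0))
    (hf : IsJostSolution q k f) (hk : 0 < k) (hq : ∀ R ∈ Ici 0, |q R| ≤ M / (1 + R ^ 2))
    (ha : 0 ≤ a) :
    ComparableWith (Real.exp (M / k * (Real.pi / 2 - Real.arctan a)))
      ((2 * k * ‖connectionCoeff k u f‖) ^ 2) (energy k u a) := by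
  have hM := nonneg_of_abs_le_div_one_add_sq hq
  refine .of_tendsto (tendsto_energy (hu.mono Ioi_subset_Ici_self) hf
    (tendsto_zero_of_abs_le_div_one_add_sq hq) hk) ?_
  filter_upwards [eventually_ge_atTop a] with b hab
  refine (comparableWith_energy (hu.mono (Ici_subset_Ici.2 ha)) hk
    (fun R hR ↦ hq R (ha.trans hR)) hab).mono ?_ (energy_nonneg ..) (energy_nonneg ..)
  gcongr
  exact (Real.arctan_lt_pi_div_two b).le

theorem comparableWith_sq_connectionCoeff {M : ℝ} (hu : IsRegularSolution q k u)
    (hf : IsJostSolution q k f) (hk : 0 < k) (hq : ∀ R ∈ Ici 0, |q R| ≤ M / (1 + R ^ 2)) :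
    ComparableWith (Real.exp (M / k * (Real.pi / 2)))
      ((2 * k * ‖connectionCoeff k u f‖) ^ 2) 1 := by
  simpa [energy, hu.apply_zero, hu.deriv_zero] using
    comparableWith_connectionCoeff_energy hu.isSolutionOn hf hk hq le_rfl

theorem connectionCoeff_ne_zero {M : ℝ} (hu : IsRegularSolution q k u)
    (hf : IsJostSolution q k f) (hk : 0 < k) (hq : ∀ R ∈ Ici 0, |q R| ≤ M / (1 + R ^ 2)) :
    connectionCoeff k u f ≠ 0 := by
  intro h
  have := (comparableWith_sq_connectionCoeff hu hf hk hq).2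
  norm_num [h] at this

theorem comparableWith_connectionCoeff_of_one_le {M : ℝ} (hu : IsRegularSolution q k u)
    (hf : IsJostSolution q k f) (hk : 1 ≤ k) (hq : ∀ R ∈ Ici 0, |q R| ≤ M / (1 + R ^ 2)) :
    ComparableWith √(Real.exp (M * (Real.pi / 2))) (2 * ‖connectionCoeff k u f‖) k⁻¹ := by
  have hk0 : 0 < k := one_pos.trans_le hk
  have hM := nonneg_of_abs_le_div_one_add_sq hq
  have hsq : ComparableWith (Real.exp (M * (Real.pi / 2)))
      ((k * (2 * ‖connectionCoeff k u f‖)) ^ 2) ((k * k⁻¹) ^ 2) := by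
    rw [mul_inv_cancel₀ hk0.ne', one_pow, ← mul_assoc, mul_comm k 2]
    refine (comparableWith_sq_connectionCoeff hu hf hk0 hq).mono ?_ (sq_nonneg _) zero_le_one
    gcongr
    exact div_le_self hM hk
  exact (hsq.of_sq (by positivity) (by positivity)).of_const_mul hk0

/-! ### Low frequencies -/

/-- A bounded regular zero-energy solution `p` together with a second zero-energy solution `t`
such that `W(t, p) = 1`. The bounds are those of the free pair `p = 1`, `t = -R` for large `R`. -/
structure IsResonancePair (q : ℝ → ℝ) (C : ℝ) (p t : ℝ → ℝ) : Prop where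
  left : IsRegularSolution q 0 p
  right : IsSolutionOn q 0 t (Ici 0)
  wronskian_eq_one : ∀ R ∈ Ici 0, wronskian t p R = 1
  abs_left_le : ∀ R ∈ Ici 0, |p R| ≤ C
  abs_right_le : ∀ R ∈ Ici 0, |t R| ≤ C * (1 + R)
  abs_mul_deriv_left_le : ∀ R ∈ Ici 0, |R * deriv p R| ≤ C
  abs_deriv_right_le : ∀ R ∈ Ici 0, |deriv t R| ≤ C

namespace IsResonancePair

variable {C L : ℝ} {p t : ℝ → ℝ}

lemma eq_wronskian_mul_add (h : IsResonancePair q C p t) (u : ℝ → ℝ) (hR : 0 ≤ R) :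
    u R = p R * wronskian t u R + t R * wronskian u p R := by
  have hW := h.wronskian_eq_one R hR
  unfold wronskian at hW ⊢
  linear_combination -u R * hW

lemma deriv_eq_wronskian_mul_add (h : IsResonancePair q C p t) (u : ℝ → ℝ) (hR : 0 ≤ R) :
    deriv u R = deriv p R * wronskian t u R + deriv t R * wronskian u p R := by
  have hW := h.wronskian_eq_one R hR
  unfold wronskian at hW ⊢
  linear_combination -deriv u R * hW

lemma abs_right_div_le (h : IsResonancePair q C p t) (hL : 1 ≤ L) (hR : R ∈ Icc 0 L) :
    |t R / L| ≤ 2 * C := by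
  have hL0 : 0 < L := one_pos.trans_le hL
  have hC : 0 ≤ C := (abs_nonneg _).trans (h.abs_left_le R hR.1)
  rw [abs_div, abs_of_pos hL0, div_le_iff₀ hL0]
  calc |t R| ≤ C * (1 + R) := h.abs_right_le R hR.1
    _ ≤ C * (L + L) := by gcongr; exact hR.2
    _ = 2 * C * L := by ring

lemma hasDerivAt_sq_wronskian_add_sq (h : IsResonancePair q C p t)
    (hu : IsSolutionOn q L⁻¹ u (Ici 0)) (hL : L ≠ 0) (hR : 0 ≤ R) :
    HasDerivAt (fun R ↦ wronskian t u R ^ 2 + (L * wronskian u p R) ^ 2)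
      (L⁻¹ * (2 * ((p R * wronskian t u R + t R / L * (L * wronskian u p R))
        * (p R * (L * wronskian u p R) - t R / L * wronskian t u R)))) R := by
  have hA := h.right.hasDerivAt_wronskian hu hR
  have hB := hu.hasDerivAt_wronskian h.left.isSolutionOn hR
  refine ((hA.pow 2).add ((hB.const_mul L).pow 2)).congr_deriv ?_
  rw [h.eq_wronskian_mul_add u hR]
  simp only [smul_eq_mul]
  field_simp
  ring

/-- Variation of parameters on `[0, L]`, where `k = L⁻¹` is still too small to be felt. -/
lemma comparableWith_sq_wronskian_add_sq (h : IsResonancePair q C p t)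
    (hu : IsRegularSolution q L⁻¹ u) (hL : 1 ≤ L) :
    ComparableWith (Real.exp (5 * C ^ 2))
      (wronskian t u L ^ 2 + (L * wronskian u p L) ^ 2) 1 := by
  have hL0 : 0 < L := one_pos.trans_le hL
  have hinit : wronskian t u 0 ^ 2 + (L * wronskian u p 0) ^ 2 = 1 := by
    have hA : wronskian t u 0 = 1 := by
      rw [← h.wronskian_eq_one 0 self_mem_Ici, wronskian, wronskian, hu.apply_zero, hu.deriv_zero,
        h.left.apply_zero, h.left.deriv_zero]
    have hB : wronskian u p 0 = 0 := by simp [wronskian, hu.apply_zero, h.left.apply_zero]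
    simp [hA, hB]
  have hexp : 5 * C ^ 2 / L * L - 5 * C ^ 2 / L * 0 = 5 * C ^ 2 := by field_simp; ring
  rw [← hinit, ← hexp]
  refine comparableWith_exp_of_abs_deriv_le hL0.le
    (fun R hR ↦ h.hasDerivAt_sq_wronskian_add_sq hu.isSolutionOn hL0.ne' hR.1)
    (fun R _ ↦ (hasDerivAt_id R).const_mul (5 * C ^ 2 / L)) fun R hR ↦ ?_
  set x := wronskian t u R
  set y := L * wronskian u p R
  have hcoeff : p R ^ 2 + (t R / L) ^ 2 ≤ 5 * C ^ 2 := by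
    linarith [sq_le_sq.2 ((h.abs_left_le R hR.1).trans (le_abs_self C)),
      sq_le_sq.2 ((h.abs_right_div_le hL hR).trans (le_abs_self (2 * C)))]
  calc |L⁻¹ * (2 * ((p R * x + t R / L * y) * (p R * y - t R / L * x)))|
      = L⁻¹ * |2 * ((p R * x + t R / L * y) * (p R * y - t R / L * x))| := by
        rw [abs_mul, abs_of_pos (inv_pos.2 hL0)]
    _ ≤ L⁻¹ * ((p R * x + t R / L * y) ^ 2 + (p R * y - t R / L * x) ^ 2) := by
        gcongr
        exact abs_two_mul_mul_le_add_sq ..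
    _ = L⁻¹ * ((p R ^ 2 + (t R / L) ^ 2) * (x ^ 2 + y ^ 2)) := by ring
    _ ≤ L⁻¹ * (5 * C ^ 2 * (x ^ 2 + y ^ 2)) := by gcongr
    _ = 5 * C ^ 2 / L * 1 * (x ^ 2 + y ^ 2) := by ring

lemma comparableWith_sq_add_sq_deriv (h : IsResonancePair q C p t)
    (hu : IsRegularSolution q L⁻¹ u) (hL : 1 ≤ L) :
    ComparableWith (7 * C ^ 2 * Real.exp (5 * C ^ 2)) (u L ^ 2 + (L * deriv u L) ^ 2) 1 := by
  have hL0 : 0 < L := one_pos.trans_le hL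
  have hdet : (p L * deriv t L - t L / L * (L * deriv p L)) ^ 2 = 1 := by
    rw [← one_pow 2, ← h.wronskian_eq_one L hL0.le, wronskian]
    field_simp
    ring
  have hchange := (comparableWith_sq_add_sq_of_det hdet
    (wronskian t u L) (L * wronskian u p L)).mono (K' := 7 * C ^ 2) ?_
    (by positivity) (by positivity)
  · convert hchange.trans (h.comparableWith_sq_wronskian_add_sq hu hL) (by positivity)
      (Real.exp_pos _).le using 2
    · rw [h.eq_wronskian_mul_add u hL0.le]
      field_simp
    · rw [h.deriv_eq_wronskian_mul_add u hL0.le]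
      ring
  · linarith [sq_le_sq.2 ((h.abs_left_le L hL0.le).trans (le_abs_self C)),
      sq_le_sq.2 ((h.abs_right_div_le hL (right_mem_Icc.2 hL0.le)).trans (le_abs_self (2 * C))),
      sq_le_sq.2 ((h.abs_mul_deriv_left_le L hL0.le).trans (le_abs_self C)),
      sq_le_sq.2 ((h.abs_deriv_right_le L hL0.le).trans (le_abs_self C))]

end IsResonancePair

lemma arctan_le_self {x : ℝ} (hx : 0 ≤ x) : Real.arctan x ≤ x := by
  simpa [Real.tan_arctan] using
    Real.le_tan (Real.arctan_nonneg.2 hx) (Real.arctan_lt_pi_div_two x)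

/-- The two regimes meet at `R = k⁻¹`. -/
theorem comparableWith_connectionCoeff_of_le_one {C M : ℝ} {p t : ℝ → ℝ}
    (h : IsResonancePair q C p t) (hu : IsRegularSolution q k u) (hf : IsJostSolution q k f)
    (hk : 0 < k) (hk1 : k ≤ 1) (hq : ∀ R ∈ Ici 0, |q R| ≤ M / (1 + R ^ 2)) :
    ComparableWith √(Real.exp M * (7 * C ^ 2 * Real.exp (5 * C ^ 2)))
      (2 * ‖connectionCoeff k u f‖) 1 := by
  have hM := nonneg_of_abs_le_div_one_add_sq hq
  have hinner : ComparableWith (7 * C ^ 2 * Real.exp (5 * C ^ 2))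
      (k ^ 2 * (u k⁻¹ ^ 2 + (k⁻¹ * deriv u k⁻¹) ^ 2)) (k ^ 2 * 1) :=
    (h.comparableWith_sq_add_sq_deriv (by simpa using hu) (one_le_inv_iff₀.2 ⟨hk, hk1⟩)).const_mul
      (sq_nonneg k)
  have henergy : k ^ 2 * (u k⁻¹ ^ 2 + (k⁻¹ * deriv u k⁻¹) ^ 2) = energy k u k⁻¹ := by
    rw [energy]
    field_simp
    ring
  have hphase : M / k * (Real.pi / 2 - Real.arctan k⁻¹) ≤ M := by
    calc M / k * (Real.pi / 2 - Real.arctan k⁻¹) = M / k * Real.arctan k := by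
          rw [Real.arctan_inv_of_pos hk, sub_sub_cancel]
      _ ≤ M / k * k := by gcongr; exact arctan_le_self hk.le
      _ = M := div_mul_cancel₀ M hk.ne'
  have houter : ComparableWith (Real.exp M) ((2 * k * ‖connectionCoeff k u f‖) ^ 2)
      (energy k u k⁻¹) :=
    (comparableWith_connectionCoeff_energy hu.isSolutionOn hf hk hq (inv_pos.2 hk).le).mono
      (Real.exp_le_exp.2 hphase) (sq_nonneg _) (energy_nonneg ..)
  have hsq := houter.trans (henergy ▸ hinner) (Real.exp_pos M).le (by positivity)
  have hscale : (2 * k * ‖connectionCoeff k u f‖) ^ 2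
      = k ^ 2 * (2 * ‖connectionCoeff k u f‖) ^ 2 := by ring
  rw [hscale, ← one_pow (M := ℝ) 2] at hsq
  exact (hsq.of_const_mul (pow_pos hk 2)).of_sq (by positivity) zero_le_one

end ConnectionFormula

/-! ### The spectral density -/

section SpectralDensity

variable {q : ℝ → ℝ} {M : ℝ} {φ : ℝ → ℝ → ℝ} {f : ℝ → ℝ → ℂ}

theorem isTheta_connectionCoeff_Ioc {C : ℝ} {p t : ℝ → ℝ}
    (hq : ∀ R ∈ Ici 0, |q R| ≤ M / (1 + R ^ 2)) (h : IsResonancePair q C p t)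
    (hφ : ∀ ξ > 0, IsRegularSolution q √ξ (φ ξ)) (hf : ∀ ξ > 0, IsJostSolution q √ξ (f ξ)) :
    (fun ξ ↦ connectionCoeff √ξ (φ ξ) (f ξ)) =Θ[𝓟 (Ioc 0 1)] fun _ ↦ (1 : ℝ) := by
  rw [← isTheta_norm_left, ← isTheta_const_mul_left (two_ne_zero (α := ℝ))]
  refine isTheta_principal_of_comparableWith
    (K := √(Real.exp M * (7 * C ^ 2 * Real.exp (5 * C ^ 2)))) fun ξ hξ ↦ ?_
  simpa using comparableWith_connectionCoeff_of_le_one h (hφ ξ hξ.1) (hf ξ hξ.1)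
    (Real.sqrt_pos.2 hξ.1) (Real.sqrt_le_one.2 hξ.2) hq

theorem isTheta_connectionCoeff_Ici (hq : ∀ R ∈ Ici 0, |q R| ≤ M / (1 + R ^ 2))
    (hφ : ∀ ξ > 0, IsRegularSolution q √ξ (φ ξ)) (hf : ∀ ξ > 0, IsJostSolution q √ξ (f ξ)) :
    (fun ξ ↦ connectionCoeff √ξ (φ ξ) (f ξ)) =Θ[𝓟 (Ici 1)] fun ξ ↦ (√ξ)⁻¹ := by
  rw [← isTheta_norm_left, ← isTheta_const_mul_left (two_ne_zero (α := ℝ))]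
  refine isTheta_principal_of_comparableWith (K := √(Real.exp (M * (Real.pi / 2)))) fun ξ hξ ↦ ?_
  have hξ0 : 0 < ξ := one_pos.trans_le hξ
  simpa [abs_of_nonneg (Real.sqrt_nonneg ξ)] using
    comparableWith_connectionCoeff_of_one_le (hφ ξ hξ0) (hf ξ hξ0) (Real.one_le_sqrt.2 hξ) hq

/-- The spectral density attached to a connection coefficient `a` at energy `ξ`. -/
def spectralDensity (a : ℂ) (ξ : ℝ) : ℝ :=
  (4 * Real.pi * √ξ * ‖a‖ ^ 2)⁻¹

lemma isTheta_spectralDensity {a : ℝ → ℂ} {g : ℝ → ℝ} {l : Filter ℝ} (h : a =Θ[l] g) :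
    (fun ξ ↦ spectralDensity (a ξ) ξ) =Θ[l] fun ξ ↦ (√ξ * g ξ ^ 2)⁻¹ := by
  have hsqrt : (fun ξ ↦ 4 * Real.pi * √ξ) =Θ[l] fun ξ ↦ √ξ :=
    (isTheta_const_mul_left (by positivity)).2 (isTheta_refl ..)
  exact (hsqrt.mul (h.norm_left.pow 2)).inv

lemma isTheta_spectralDensity_Ioc {a : ℝ → ℂ} (h : a =Θ[𝓟 (Ioc 0 1)] fun _ ↦ (1 : ℝ)) :
    (fun ξ ↦ spectralDensity (a ξ) ξ) =Θ[𝓟 (Ioc 0 1)] fun ξ ↦ (√ξ)⁻¹ := by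
  simpa using isTheta_spectralDensity h

lemma isTheta_spectralDensity_Ici {a : ℝ → ℂ} (h : a =Θ[𝓟 (Ici 1)] fun ξ ↦ (√ξ)⁻¹) :
    (fun ξ ↦ spectralDensity (a ξ) ξ) =Θ[𝓟 (Ici 1)] fun ξ ↦ √ξ := by
  refine (isTheta_spectralDensity h).trans_eventuallyEq ?_
  filter_upwards [mem_principal_self (Ici (1 : ℝ))] with ξ hξ
  have hsqrt : √ξ ≠ 0 := (Real.sqrt_pos.2 (one_pos.trans_le hξ)).ne'
  field_simp

lemma exists_bounds_of_isTheta {a : ℝ → ℂ} (hlow : a =Θ[𝓟 (Ioc 0 1)] fun _ ↦ (1 : ℝ))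
    (hhigh : a =Θ[𝓟 (Ici 1)] fun ξ ↦ (√ξ)⁻¹) :
    ∃ c C : ℝ, 0 < c ∧ c ≤ C ∧
      (∀ ξ : ℝ, 0 < ξ → ξ ≤ 1 → c ≤ ‖a ξ‖ ∧ ‖a ξ‖ ≤ C) ∧
      (∀ ξ : ℝ, 1 ≤ ξ → c / √ξ ≤ ‖a ξ‖ ∧ ‖a ξ‖ ≤ C / √ξ) ∧
      (∀ ξ : ℝ, 0 < ξ → ξ ≤ 1 →
        c / √ξ ≤ spectralDensity (a ξ) ξ ∧ spectralDensity (a ξ) ξ ≤ C / √ξ) ∧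
      (∀ ξ : ℝ, 1 ≤ ξ →
        c * √ξ ≤ spectralDensity (a ξ) ξ ∧ spectralDensity (a ξ) ξ ≤ C * √ξ) := by
  have hρ (ξ : ℝ) : ‖spectralDensity (a ξ) ξ‖ = spectralDensity (a ξ) ξ :=
    Real.norm_of_nonneg (by unfold spectralDensity; positivity)
  have hsqrt (ξ : ℝ) : ‖√ξ‖ = √ξ := Real.norm_of_nonneg (Real.sqrt_nonneg ξ)
  obtain ⟨K, ⟨⟨⟨h₁, h₂⟩, h₃⟩, h₄⟩, hK⟩ := ((((isTheta_principal_iff.1 hlow).and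
    (isTheta_principal_iff.1 hhigh)).and
    (isTheta_principal_iff.1 (isTheta_spectralDensity_Ioc hlow))).and
    (isTheta_principal_iff.1 (isTheta_spectralDensity_Ici hhigh))).and
    (eventually_ge_atTop 1) |>.exists
  have hK0 : 0 < K := one_pos.trans_le hK
  simp only [norm_one, norm_inv, hρ, hsqrt] at h₁ h₂ h₃ h₄
  refine ⟨K⁻¹, K, inv_pos.2 hK0, (inv_le_one_of_one_le₀ hK).trans hK,
    fun ξ h0 h1 ↦ ?_, fun ξ h1 ↦ (h₂ ξ h1).inv_mul_le_and_le_mul hK0,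
    fun ξ h0 h1 ↦ (h₃ ξ ⟨h0, h1⟩).inv_mul_le_and_le_mul hK0,
    fun ξ h1 ↦ (h₄ ξ h1).inv_mul_le_and_le_mul hK0⟩
  simpa using (h₁ ξ ⟨h0, h1⟩).inv_mul_le_and_le_mul hK0

end SpectralDensity

/-! ### The soliton potential -/

/-- `W(R) = (1 + R²/3)^{-1/2}`; the potential of the theorem is `5 W⁴`. -/
def soliton (R : ℝ) : ℝ :=
  (√(1 + R ^ 2 / 3))⁻¹

lemma soliton_pos (R : ℝ) : 0 < soliton R := by
  unfold soliton
  positivity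

lemma soliton_sq_mul (R : ℝ) : soliton R ^ 2 * (1 + R ^ 2 / 3) = 1 := by
  have h : 0 < 1 + R ^ 2 / 3 := by positivity
  rw [soliton, inv_pow, Real.sq_sqrt h.le, inv_mul_cancel₀ h.ne']

lemma hasDerivAt_soliton (R : ℝ) : HasDerivAt soliton (-(R / 3) * soliton R ^ 3) R := by
  have h : 0 < 1 + R ^ 2 / 3 := by positivity
  have hbase : HasDerivAt (fun R : ℝ ↦ 1 + R ^ 2 / 3) (2 * R / 3) R := by
    simpa using ((hasDerivAt_pow 2 R).div_const 3).const_add 1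
  refine ((hbase.sqrt h.ne').inv (Real.sqrt_pos.2 h).ne').congr_deriv ?_
  rw [soliton]
  field_simp

lemma hasDerivAt_mul_soliton_pow {n : ℝ → ℝ} {n' R : ℝ} (hn : HasDerivAt n n' R) (m : ℕ) :
    HasDerivAt (fun R ↦ n R * soliton R ^ m)
      ((n' * (1 + R ^ 2 / 3) - m * n R * (R / 3)) * soliton R ^ (m + 2)) R := by
  have hw := soliton_sq_mul R
  refine (hn.mul ((hasDerivAt_soliton R).pow m)).congr_deriv ?_
  simp only [Pi.pow_apply]
  rcases m with _ | m
  · simp only [pow_zero, Nat.cast_zero]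
    linear_combination (-n') * hw
  · simp only [Nat.add_sub_cancel]
    linear_combination (-n' * soliton R ^ (m + 1)) * hw

lemma abs_mul_soliton_pow_le {x c R : ℝ} {j : ℕ} (h : |x| ≤ c * (1 + R ^ 2 / 3) ^ j) :
    |x * soliton R ^ (2 * j)| ≤ c := by
  rw [abs_mul, abs_of_pos (pow_pos (soliton_pos R) _)]
  calc |x| * soliton R ^ (2 * j) ≤ c * (1 + R ^ 2 / 3) ^ j * soliton R ^ (2 * j) := by
        gcongr
        exact (pow_pos (soliton_pos R) _).le
    _ = c * (soliton R ^ 2 * (1 + R ^ 2 / 3)) ^ j := by rw [mul_pow, ← pow_mul]; ring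
    _ = c := by rw [soliton_sq_mul, one_pow, mul_one]

lemma abs_mul_soliton_le (R : ℝ) : |R * soliton R| ≤ 2 := by
  refine abs_le_of_sq_le_sq (?_ : (R * soliton R) ^ 2 ≤ 2 ^ 2) two_pos.le
  linarith [soliton_sq_mul R, sq_nonneg (soliton R), mul_pow R (soliton R) 2]

lemma inv_soliton_le {R : ℝ} (hR : 0 ≤ R) : (soliton R)⁻¹ ≤ 1 + R := by
  rw [soliton, inv_inv]
  exact Real.sqrt_le_iff.2 ⟨by positivity, by nlinarith⟩

/-- The potential `q = 5 W⁴`. -/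
def potential (R : ℝ) : ℝ :=
  5 / (1 + R ^ 2 / 3) ^ 2

lemma potential_eq (R : ℝ) : potential R = 5 * soliton R ^ 4 := by
  rw [potential, div_eq_iff (by positivity)]
  linear_combination (-5 * (soliton R ^ 2 * (1 + R ^ 2 / 3) + 1)) * soliton_sq_mul R

lemma abs_potential_le (R : ℝ) : |potential R| ≤ 15 / (1 + R ^ 2) := by
  rw [potential, abs_of_nonneg (by positivity), div_le_div_iff₀ (by positivity) (by positivity)]
  nlinarith [sq_nonneg R, sq_nonneg (R ^ 2)]

/-- The zero-energy solution `2R (1/2 + R ∂_R) W`, generated by the scaling invariance of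
`W'' + (2/R) W' + W⁵ = 0`. -/
def resonance (R : ℝ) : ℝ :=
  R * (1 - R ^ 2 / 3) * soliton R ^ 3

/-- The zero-energy solution that grows linearly; it comes from `resonance` by reduction of
order. -/
def growingSolution (R : ℝ) : ℝ :=
  (1 - 2 * R ^ 2 + R ^ 4 / 9) * soliton R ^ 3

lemma hasDerivAt_resonance (R : ℝ) :
    HasDerivAt resonance ((1 - 5 * R ^ 2 / 3) * soliton R ^ 5) R := by
  have hn : HasDerivAt (fun R : ℝ ↦ R * (1 - R ^ 2 / 3)) (1 - R ^ 2) R := by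
    refine ((hasDerivAt_id R).mul (((hasDerivAt_pow 2 R).div_const 3).const_sub 1)).congr_deriv ?_
    simp only [id_eq, Nat.cast_ofNat, Nat.add_one_sub_one, pow_one]
    ring
  exact (hasDerivAt_mul_soliton_pow hn 3).congr_deriv (by push_cast; ring)

lemma deriv_resonance : deriv resonance = fun R ↦ (1 - 5 * R ^ 2 / 3) * soliton R ^ 5 :=
  funext fun R ↦ (hasDerivAt_resonance R).deriv

lemma isRegularSolution_resonance : IsRegularSolution potential 0 resonance where
  isSolutionOn.hasDerivAt R _ := (hasDerivAt_resonance R).differentiableAt.hasDerivAt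
  isSolutionOn.hasDerivAt_deriv R _ := by
    have hn : HasDerivAt (fun R : ℝ ↦ 1 - 5 * R ^ 2 / 3) (-(10 * R / 3)) R := by
      refine ((((hasDerivAt_pow 2 R).const_mul 5).div_const 3).const_sub 1).congr_deriv ?_
      simp only [Nat.cast_ofNat, Nat.add_one_sub_one, pow_one]
      ring
    rw [deriv_resonance]
    refine (hasDerivAt_mul_soliton_pow hn 5).congr_deriv ?_
    rw [potential_eq, resonance, smul_eq_mul]
    push_cast
    ring
  apply_zero := by simp [resonance]
  deriv_zero := by simp [deriv_resonance, soliton]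

lemma hasDerivAt_growingSolution (R : ℝ) :
    HasDerivAt growingSolution (R * (-5 + 10 * R ^ 2 / 9 + R ^ 4 / 27) * soliton R ^ 5) R := by
  have hn : HasDerivAt (fun R : ℝ ↦ 1 - 2 * R ^ 2 + R ^ 4 / 9) (-4 * R + 4 * R ^ 3 / 9) R := by
    refine ((((hasDerivAt_pow 2 R).const_mul 2).const_sub 1).add
      ((hasDerivAt_pow 4 R).div_const 9)).congr_deriv ?_
    simp only [Nat.cast_ofNat, Nat.add_one_sub_one, pow_one]
    ring
  exact (hasDerivAt_mul_soliton_pow hn 3).congr_deriv (by push_cast; ring)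

lemma deriv_growingSolution : deriv growingSolution =
    fun R ↦ R * (-5 + 10 * R ^ 2 / 9 + R ^ 4 / 27) * soliton R ^ 5 :=
  funext fun R ↦ (hasDerivAt_growingSolution R).deriv

lemma isSolutionOn_growingSolution (s : Set ℝ) : IsSolutionOn potential 0 growingSolution s where
  hasDerivAt R _ := (hasDerivAt_growingSolution R).differentiableAt.hasDerivAt
  hasDerivAt_deriv R _ := by
    have hn : HasDerivAt (fun R : ℝ ↦ R * (-5 + 10 * R ^ 2 / 9 + R ^ 4 / 27))
        (-5 + 10 * R ^ 2 / 3 + 5 * R ^ 4 / 27) R := by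
      refine ((hasDerivAt_id R).mul (((((hasDerivAt_pow 2 R).const_mul 10).div_const 9).const_add
        (-5)).add ((hasDerivAt_pow 4 R).div_const 27))).congr_deriv ?_
      simp only [Pi.add_apply, id_eq, Nat.cast_ofNat, Nat.add_one_sub_one, pow_one]
      ring
    rw [deriv_growingSolution]
    refine (hasDerivAt_mul_soliton_pow hn 5).congr_deriv ?_
    rw [potential_eq, growingSolution, smul_eq_mul]
    push_cast
    ring

lemma wronskian_growingSolution_resonance (R : ℝ) : wronskian growingSolution resonance R = 1 := by
  have hw : (soliton R ^ 2 * (1 + R ^ 2 / 3)) ^ 4 = 1 := by rw [soliton_sq_mul, one_pow]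
  rw [wronskian, deriv_resonance, deriv_growingSolution, growingSolution, resonance]
  linear_combination hw

lemma abs_resonance_le (R : ℝ) : |resonance R| ≤ 2 := by
  have hn : |1 - R ^ 2 / 3| ≤ 1 * (1 + R ^ 2 / 3) ^ 1 := by
    rw [abs_le]; constructor <;> nlinarith [sq_nonneg R]
  calc |resonance R| = |(1 - R ^ 2 / 3) * soliton R ^ (2 * 1)| * |R * soliton R| := by
        rw [← abs_mul, resonance]; ring_nf
    _ ≤ 1 * 2 := by gcongr; exacts [abs_mul_soliton_pow_le hn, abs_mul_soliton_le R]
    _ = 2 := one_mul 2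

lemma abs_mul_deriv_resonance_le (R : ℝ) : |R * deriv resonance R| ≤ 10 := by
  have hn : |1 - 5 * R ^ 2 / 3| ≤ 5 * (1 + R ^ 2 / 3) ^ 2 := by
    rw [abs_le]; constructor <;> nlinarith [sq_nonneg R, sq_nonneg (R ^ 2)]
  calc |R * deriv resonance R|
      = |(1 - 5 * R ^ 2 / 3) * soliton R ^ (2 * 2)| * |R * soliton R| := by
        rw [← abs_mul, deriv_resonance]; ring_nf
    _ ≤ 5 * 2 := by gcongr; exacts [abs_mul_soliton_pow_le hn, abs_mul_soliton_le R]
    _ = 10 := by norm_num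

lemma abs_growingSolution_le {R : ℝ} (hR : 0 ≤ R) : |growingSolution R| ≤ 1 + R := by
  have hn : |1 - 2 * R ^ 2 + R ^ 4 / 9| ≤ 1 * (1 + R ^ 2 / 3) ^ 2 := by
    rw [abs_le]; constructor <;> nlinarith [sq_nonneg R, sq_nonneg (R ^ 2 / 3 - 1)]
  have hw := inv_pos.2 (soliton_pos R)
  calc |growingSolution R|
      = |(1 - 2 * R ^ 2 + R ^ 4 / 9) * soliton R ^ (2 * 2)| * (soliton R)⁻¹ := by
        rw [← abs_of_pos hw, ← abs_mul, growingSolution]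
        congr 1
        field_simp [(soliton_pos R).ne']
    _ ≤ 1 * (1 + R) := by
        gcongr
        exacts [abs_mul_soliton_pow_le hn, inv_soliton_le hR]
    _ = 1 + R := one_mul _

lemma abs_deriv_growingSolution_le (R : ℝ) : |deriv growingSolution R| ≤ 10 := by
  have hn : |-5 + 10 * R ^ 2 / 9 + R ^ 4 / 27| ≤ 5 * (1 + R ^ 2 / 3) ^ 2 := by
    rw [abs_le]; constructor <;> nlinarith [sq_nonneg R, sq_nonneg (R ^ 2)]
  calc |deriv growingSolution R|
      = |(-5 + 10 * R ^ 2 / 9 + R ^ 4 / 27) * soliton R ^ (2 * 2)| * |R * soliton R| := by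
        rw [← abs_mul, deriv_growingSolution]; ring_nf
    _ ≤ 5 * 2 := by gcongr; exacts [abs_mul_soliton_pow_le hn, abs_mul_soliton_le R]
    _ = 10 := by norm_num

theorem isResonancePair_resonance_growingSolution :
    IsResonancePair potential 10 resonance growingSolution where
  left := isRegularSolution_resonance
  right := isSolutionOn_growingSolution _
  wronskian_eq_one R _ := wronskian_growingSolution_resonance R
  abs_left_le R _ := (abs_resonance_le R).trans (by norm_num)
  abs_right_le R hR := (abs_growingSolution_le hR).trans <|
    le_mul_of_one_le_left (add_nonneg zero_le_one hR) (by norm_num)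
  abs_mul_deriv_left_le R _ := abs_mul_deriv_resonance_le R
  abs_deriv_right_le R _ := abs_deriv_growingSolution_le R

lemma isRegularSolution_potential {u : ℝ → ℝ} {ξ : ℝ} (hξ : 0 < ξ) (hu0 : u 0 = 0)
    (hu0' : deriv u 0 = 1) (hu : ∀ R, HasDerivAt u (deriv u R) R)
    (hu' : ∀ R, HasDerivAt (deriv u) (deriv (deriv u) R) R)
    (heq : ∀ R, -deriv (deriv u) R - (5 / (1 + R ^ 2 / 3) ^ 2) * u R = ξ * u R) :
    IsRegularSolution potential √ξ u where
  isSolutionOn.hasDerivAt R _ := hu R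
  isSolutionOn.hasDerivAt_deriv R _ := (hu' R).congr_deriv <| by
    rw [Real.sq_sqrt hξ.le, potential, smul_eq_mul]
    linear_combination -heq R
  apply_zero := hu0
  deriv_zero := hu0'

lemma isJostSolution_potential {f : ℝ → ℂ} {ξ : ℝ} (hξ : 0 < ξ)
    (hf : ∀ R ∈ Ioi (0 : ℝ), HasDerivAt f (deriv f R) R)
    (hf' : ∀ R ∈ Ioi (0 : ℝ), HasDerivAt (deriv f) (deriv (deriv f) R) R)
    (heq : ∀ R ∈ Ioi (0 : ℝ),
      -deriv (deriv f) R - (5 / (1 + (R : ℂ) ^ 2 / 3) ^ 2) * f R = (ξ : ℂ) * f R)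
    (hlim : Tendsto (fun R : ℝ ↦ f R * Complex.exp (-Complex.I * (R : ℂ) * (√ξ : ℂ))) atTop
      (𝓝 1)) :
    IsJostSolution potential √ξ f where
  isSolutionOn.hasDerivAt := hf
  isSolutionOn.hasDerivAt_deriv R hR := (hf' R hR).congr_deriv <| by
    rw [Real.sq_sqrt hξ.le, potential, Complex.real_smul]
    push_cast
    linear_combination -heq R hR
  tendsto := hlim

end Development

theorem connection_coefficient_general {q : ℝ → ℝ} {C M : ℝ} {p t : ℝ → ℝ}
    (hq : ∀ R ∈ Set.Ici 0, |q R| ≤ M / (1 + R ^ 2)) (h : IsResonancePair q C p t)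
    (φ : ℝ → ℝ → ℝ) (fp : ℝ → ℝ → ℂ)
    (hφ : ∀ ξ > 0, IsRegularSolution q √ξ (φ ξ)) (hfp : ∀ ξ > 0, IsJostSolution q √ξ (fp ξ)) :
    (∀ ξ : ℝ, 0 < ξ → ∀ R : ℝ, 0 < R →
      fp ξ R * conj (deriv (fp ξ) R) - deriv (fp ξ) R * conj (fp ξ R)
        = -2 * Complex.I * (√ξ : ℂ)) ∧
    (∃ a : ℝ → ℂ,
      (∀ ξ : ℝ, 0 < ξ →
        a ξ ≠ 0 ∧
        (∀ R : ℝ, 0 < R →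
          (φ ξ R : ℂ) * conj (deriv (fp ξ) R) - ((deriv (φ ξ) R : ℝ) : ℂ) * conj (fp ξ R)
            = (-2 * Complex.I * (√ξ : ℂ)) * a ξ) ∧
        (∀ R : ℝ, 0 < R →
          (φ ξ R : ℂ) = a ξ * fp ξ R + conj (a ξ) * conj (fp ξ R))) ∧
      ∃ c C : ℝ, 0 < c ∧ c ≤ C ∧
        (∀ ξ : ℝ, 0 < ξ → ξ ≤ 1 → c ≤ ‖a ξ‖ ∧ ‖a ξ‖ ≤ C) ∧
        (∀ ξ : ℝ, 1 ≤ ξ → c / √ξ ≤ ‖a ξ‖ ∧ ‖a ξ‖ ≤ C / √ξ) ∧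
        (∀ ξ : ℝ, 0 < ξ → ξ ≤ 1 →
          c / √ξ ≤ (4 * Real.pi * √ξ * ‖a ξ‖ ^ 2)⁻¹ ∧
          (4 * Real.pi * √ξ * ‖a ξ‖ ^ 2)⁻¹ ≤ C / √ξ) ∧
        (∀ ξ : ℝ, 1 ≤ ξ →
          c * √ξ ≤ (4 * Real.pi * √ξ * ‖a ξ‖ ^ 2)⁻¹ ∧
          (4 * Real.pi * √ξ * ‖a ξ‖ ^ 2)⁻¹ ≤ C * √ξ)) := by
  have hq0 : Tendsto q atTop (𝓝 0) := tendsto_zero_of_abs_le_div_one_add_sq hq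
  have hreg (ξ : ℝ) (hξ : 0 < ξ) : IsSolutionOn q √ξ (φ ξ) (Set.Ioi 0) :=
    (hφ ξ hξ).isSolutionOn.mono Set.Ioi_subset_Ici_self
  refine ⟨fun ξ hξ R hR ↦ ?_, fun ξ ↦ connectionCoeff √ξ (φ ξ) (fp ξ), fun ξ hξ ↦ ?_, ?_⟩
  · rw [← (hfp ξ hξ).wronskian_conj_right _ hR, (hfp ξ hξ).wronskian_conj hq0 hR]
  · have hk := Real.sqrt_pos.2 hξ
    exact ⟨connectionCoeff_ne_zero (hφ ξ hξ) (hfp ξ hξ) hk hq,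
      fun R ↦ wronskian_eq_mul_connectionCoeff (hreg ξ hξ) (hfp ξ hξ) hk.ne',
      fun R ↦ eq_connectionCoeff_mul_add (hreg ξ hξ) (hfp ξ hξ) hq0 hk.ne'⟩
  · exact exists_bounds_of_isTheta (isTheta_connectionCoeff_Ioc hq h hφ hfp)
      (isTheta_connectionCoeff_Ici hq hφ hfp)

/-- Wronskian relations, the connection coefficient `a(ξ)`, its size, and the size of the
spectral density `ρ(ξ) = (4π√ξ|a(ξ)|²)⁻¹`. -/
theorem connection_coefficient
    (φ : ℝ → ℝ → ℝ) (fp : ℝ → ℝ → ℂ)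
    -- φ(·,ξ) is the regular solution: φ(0,ξ)=0, ∂_Rφ(0,ξ)=1
    (hφ : ∀ ξ : ℝ, 0 < ξ →
      φ ξ 0 = 0 ∧ deriv (φ ξ) 0 = 1 ∧
      (∀ R : ℝ, HasDerivAt (φ ξ) (deriv (φ ξ) R) R) ∧
      (∀ R : ℝ, HasDerivAt (deriv (φ ξ)) (deriv (deriv (φ ξ)) R) R) ∧
      (∀ R : ℝ, - deriv (deriv (φ ξ)) R - (5 / (1 + R ^ 2 / 3) ^ 2) * φ ξ R = ξ * φ ξ R))
    -- fp(·,ξ) is the Jost solution: solves the equation on (0,∞) with e^{iR√ξ} asymptotics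
    (hfp : ∀ ξ : ℝ, 0 < ξ →
      (∀ R ∈ Set.Ioi (0 : ℝ), HasDerivAt (fp ξ) (deriv (fp ξ) R) R) ∧
      (∀ R ∈ Set.Ioi (0 : ℝ), HasDerivAt (deriv (fp ξ)) (deriv (deriv (fp ξ)) R) R) ∧
      (∀ R ∈ Set.Ioi (0 : ℝ),
        - deriv (deriv (fp ξ)) R - (5 / (1 + (R : ℂ) ^ 2 / 3) ^ 2) * fp ξ R
          = (ξ : ℂ) * fp ξ R) ∧
      Tendsto (fun R : ℝ =>
        fp ξ R * Complex.exp (-Complex.I * (R : ℂ) * (Real.sqrt ξ : ℂ))) atTop (𝓝 1)) :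
    -- (i) W(f₊, f₋) = -2i√ξ
    (∀ ξ : ℝ, 0 < ξ → ∀ R : ℝ, 0 < R →
      fp ξ R * conj (deriv (fp ξ) R) - deriv (fp ξ) R * conj (fp ξ R)
        = -2 * Complex.I * (Real.sqrt ξ : ℂ)) ∧
    -- (ii), (iii)
    (∃ a : ℝ → ℂ,
      (∀ ξ : ℝ, 0 < ξ →
        a ξ ≠ 0 ∧
        -- a(ξ) = W(φ(·,ξ), f₋(·,ξ)) / (-2i√ξ), the Wronskian being constant in R
        (∀ R : ℝ, 0 < R →
          (φ ξ R : ℂ) * conj (deriv (fp ξ) R) - ((deriv (φ ξ) R : ℝ) : ℂ) * conj (fp ξ R)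
            = (-2 * Complex.I * (Real.sqrt ξ : ℂ)) * a ξ) ∧
        -- the connection formula φ = a f₊ + conj(a) f₋
        (∀ R : ℝ, 0 < R →
          (φ ξ R : ℂ) = a ξ * fp ξ R + conj (a ξ) * conj (fp ξ R))) ∧
      -- size of a(ξ) and of the spectral density ρ(ξ) = (4π√ξ|a(ξ)|²)⁻¹
      ∃ c C : ℝ, 0 < c ∧ c ≤ C ∧
        (∀ ξ : ℝ, 0 < ξ → ξ ≤ 1 → c ≤ ‖a ξ‖ ∧ ‖a ξ‖ ≤ C) ∧
        (∀ ξ : ℝ, 1 ≤ ξ → c / Real.sqrt ξ ≤ ‖a ξ‖ ∧ ‖a ξ‖ ≤ C / Real.sqrt ξ) ∧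
        (∀ ξ : ℝ, 0 < ξ → ξ ≤ 1 →
          c / Real.sqrt ξ ≤ (4 * Real.pi * Real.sqrt ξ * ‖a ξ‖ ^ 2)⁻¹ ∧
          (4 * Real.pi * Real.sqrt ξ * ‖a ξ‖ ^ 2)⁻¹ ≤ C / Real.sqrt ξ) ∧
        (∀ ξ : ℝ, 1 ≤ ξ →
          c * Real.sqrt ξ ≤ (4 * Real.pi * Real.sqrt ξ * ‖a ξ‖ ^ 2)⁻¹ ∧
          (4 * Real.pi * Real.sqrt ξ * ‖a ξ‖ ^ 2)⁻¹ ≤ C * Real.sqrt ξ)) :=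
  connection_coefficient_general (fun R _ ↦ abs_potential_le R)
    isResonancePair_resonance_growingSolution φ fp
    (fun ξ hξ ↦ let ⟨h0, h0', hder, hder', heq⟩ := hφ ξ hξ
      isRegularSolution_potential hξ h0 h0' hder hder' heq)
    (fun ξ hξ ↦ let ⟨hder, hder', heq, hlim⟩ := hfp ξ hξ
      isJostSolution_potential hξ hder hder' heq hlim)

end ConnectionCoefficient
end
end

section
/- Let φ(·,ξ) be the solution of −φ'' − 5(1+R²/3)^{−2} φ = ξφ with φ(0,ξ)=0, ∂_Rφ(0,ξ)=1. Then there is a constant C such that the following pointwise bounds hold: for all ξ > 1, sup_{R>0} |φ(R,ξ)| ≤ C ξ^{−1/2}, |R ∂_R φ(R,ξ)| ≤ C R, |∂_ξ φ(R,ξ)| ≤ C min(R ξ^{−1}, R³), and |∂_ξ² φ(R,ξ)| ≤ C min(R² ξ^{−3/2}, R⁵); for all 0 < ξ < 1, |∂_ξ φ(R,ξ)| ≤ C min(R ξ^{−1/2}, R²) and |∂_ξ² φ(R,ξ)| ≤ C min(R² ξ^{−1}, R⁴). -/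
noncomputable section

namespace EigenfunctionBounds

/-!
Let `θ` be the zero-energy resonance. For a solution `u` of `-u'' - V u = ξ u`, the quantity
`v = u' - (θ' / θ) u` satisfies `v' = -(θ' / θ) v - ξ u`, so where `θ` increases the energy
`v² + ξ u²` grows at most like `θ²`, and `θ` is bounded. On the remaining compact core an ordinary
Grönwall estimate is enough, except that as `ξ → 0` it loses a factor `ξ^(-1/2)`; this is recovered
because the Wronskian of `u` with `θ` vanishes at `0` and has derivative `-ξ θ u`.

For the `ξ`-derivatives, the divided differences of `φ` in `ξ` again solve the equation, with the
divided difference of one order less as source. The bounds for the inhomogeneous equation therefore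
hold for them uniformly and pass to the limit.
-/

open Set Filter Topology

theorem sqrt_div_le_of_deriv_le_of_pos {E E' w w' : ℝ → ℝ} {a b g : ℝ} (hab : a ≤ b) (hg : 0 ≤ g)
    (hE : ∀ x ∈ Icc a b, HasDerivWithinAt E (E' x) (Icc a b) x)
    (hw : ∀ x ∈ Icc a b, HasDerivWithinAt w (w' x) (Icc a b) x)
    (hE0 : ∀ x ∈ Icc a b, 0 < E x) (hwa : 0 < w a) (hw_mono : MonotoneOn w (Icc a b))
    (hle : ∀ x ∈ Icc a b, E' x ≤ 2 * (w' x / w x) * E x + 2 * g * √(E x)) :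
    √(E b) / w b ≤ (√(E a) + g * (b - a)) / w a := by
  have w_ge : ∀ x ∈ Icc a b, w a ≤ w x := fun x hx => hw_mono (left_mem_Icc.2 hab) hx hx.1
  have w_pos : ∀ x ∈ Icc a b, 0 < w x := fun x hx => hwa.trans_le (w_ge x hx)
  have deriv_h : ∀ x ∈ Icc a b, HasDerivWithinAt (fun x => √(E x) / w x - g / w a * x)
      ((E' x / (2 * √(E x)) * w x - √(E x) * w' x) / w x ^ 2 - g / w a * 1) (Icc a b) x :=
    fun x hx => (((hE x hx).sqrt (hE0 x hx).ne').div (hw x hx) (w_pos x hx).ne').sub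
      ((hasDerivWithinAt_id x _).const_mul _)
  have h_anti : AntitoneOn (fun x => √(E x) / w x - g / w a * x) (Icc a b) := by
    refine antitoneOn_of_hasDerivWithinAt_nonpos (convex_Icc a b)
      (fun x hx => (deriv_h x hx).continuousWithinAt)
      (fun x hx => (deriv_h x (interior_subset hx)).mono interior_subset) fun x hx => ?_
    replace hx := interior_subset hx
    have hwx := w_pos x hx
    have hy : 0 < √(E x) := Real.sqrt_pos.2 (hE0 x hx)
    have deriv_sqrt_le : E' x / (2 * √(E x)) ≤ w' x / w x * √(E x) + g := by
      rw [div_le_iff₀ (by positivity)]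
      calc E' x ≤ 2 * (w' x / w x) * E x + 2 * g * √(E x) := hle x hx
        _ = 2 * (w' x / w x) * √(E x) ^ 2 + 2 * g * √(E x) := by rw [Real.sq_sqrt (hE0 x hx).le]
        _ = (w' x / w x * √(E x) + g) * (2 * √(E x)) := by ring
    rw [mul_one, sub_nonpos]
    calc (E' x / (2 * √(E x)) * w x - √(E x) * w' x) / w x ^ 2
        ≤ ((w' x / w x * √(E x) + g) * w x - √(E x) * w' x) / w x ^ 2 := by gcongr
      _ = g / w x := by field_simp; ring
      _ ≤ g / w a := by gcongr; exact w_ge x hx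
  have h_le := h_anti (left_mem_Icc.2 hab) (right_mem_Icc.2 hab) hab
  calc √(E b) / w b ≤ √(E a) / w a + g / w a * (b - a) := by linarith
    _ = (√(E a) + g * (b - a)) / w a := by ring

theorem sqrt_div_le_of_deriv_le {E E' w w' : ℝ → ℝ} {a b g : ℝ} (hab : a ≤ b) (hg : 0 ≤ g)
    (hE : ∀ x ∈ Icc a b, HasDerivWithinAt E (E' x) (Icc a b) x)
    (hw : ∀ x ∈ Icc a b, HasDerivWithinAt w (w' x) (Icc a b) x)
    (hE0 : ∀ x ∈ Icc a b, 0 ≤ E x) (hwa : 0 < w a) (hw0 : ∀ x ∈ Icc a b, 0 ≤ w' x)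
    (hle : ∀ x ∈ Icc a b, E' x ≤ 2 * (w' x / w x) * E x + 2 * g * √(E x)) :
    √(E b) / w b ≤ (√(E a) + g * (b - a)) / w a := by
  have w_mono : MonotoneOn w (Icc a b) :=
    monotoneOn_of_hasDerivWithinAt_nonneg (convex_Icc a b)
      (fun x hx => (hw x hx).continuousWithinAt)
      (fun x hx => (hw x (interior_subset hx)).mono interior_subset)
      (fun x hx => hw0 x (interior_subset hx))
  -- `√E` need not be differentiable where `E = 0`, so `E` is first raised by `ε > 0`.
  have regularized : ∀ ε > 0, √(E b + ε) / w b ≤ (√(E a + ε) + g * (b - a)) / w a :=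
    fun ε hε => sqrt_div_le_of_deriv_le_of_pos hab hg (fun x hx => (hE x hx).add_const ε) hw
      (fun x hx => add_pos_of_nonneg_of_pos (hE0 x hx) hε) hwa w_mono fun x hx => by
        have : 0 ≤ w' x / w x :=
          div_nonneg (hw0 x hx) (hwa.le.trans (w_mono (left_mem_Icc.2 hab) hx hx.1))
        refine (hle x hx).trans ?_
        gcongr <;> linarith
  have tendsto_sqrt : ∀ y, Tendsto (fun ε => √(y + ε)) (𝓝[>] 0) (𝓝 (√y)) := fun y => by
    have : Continuous fun ε => √(y + ε) := by fun_prop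
    simpa only [add_zero] using (this.tendsto 0).mono_left nhdsWithin_le_nhds
  exact le_of_tendsto_of_tendsto ((tendsto_sqrt (E b)).div_const _)
    (((tendsto_sqrt (E a)).add_const _).div_const _)
    (eventually_nhdsWithin_of_forall regularized)

theorem abs_le_mul_of_abs_deriv_le {u u' : ℝ → ℝ} {G R : ℝ} (hR : 0 ≤ R)
    (hu : ∀ x ∈ Icc 0 R, HasDerivWithinAt u (u' x) (Icc 0 R) x) (hu0 : u 0 = 0)
    (hG : ∀ x ∈ Icc 0 R, |u' x| ≤ G) : |u R| ≤ G * R := by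
  simpa [hu0, abs_of_nonneg hR] using
    (convex_Icc 0 R).norm_image_sub_le_of_norm_hasDerivWithin_le hu hG
      (left_mem_Icc.2 hR) (right_mem_Icc.2 hR)

theorem neg_mul_le_mul_sqrt {v f g y : ℝ} (hf : |f| ≤ g) (hy : 0 ≤ y) :
    -(v * f) ≤ g * √(v ^ 2 + y) :=
  calc -(v * f) ≤ |v * f| := neg_le_abs _
    _ = |f| * |v| := by rw [abs_mul, mul_comm]
    _ ≤ g * √(v ^ 2 + y) :=
      mul_le_mul hf (Real.abs_le_sqrt (by linarith)) (abs_nonneg _) ((abs_nonneg f).trans hf)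

theorem sqrt_mul_abs_le_sqrt {y ξ : ℝ} (x : ℝ) (hξ : 0 ≤ ξ) :
    √ξ * |y| ≤ √(x ^ 2 + ξ * y ^ 2) := by
  rw [← Real.sqrt_sq_eq_abs, ← Real.sqrt_mul hξ]
  exact Real.sqrt_le_sqrt (by linarith [sq_nonneg x])

theorem sqrt_sq_add_mul_sq_le {ξ : ℝ} (x y : ℝ) (hξ : 0 ≤ ξ) :
    √(x ^ 2 + ξ * y ^ 2) ≤ |x| + √ξ * |y| := by
  have : 0 ≤ |x| * (√ξ * |y|) := by positivity
  refine Real.sqrt_le_iff.2 ⟨by positivity, ?_⟩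
  rw [add_sq, mul_pow, Real.sq_sqrt hξ, sq_abs, sq_abs]
  linarith

/-- `u`, with derivative `u'`, solves the Schrödinger equation `-u'' - V u = ξ u + f` on `s`;
derivatives are one-sided at endpoints of `s`. -/
structure SolvesOn (V : ℝ → ℝ) (ξ : ℝ) (f u u' : ℝ → ℝ) (s : Set ℝ) : Prop where
  hasDeriv : ∀ x ∈ s, HasDerivWithinAt u (u' x) s x
  hasDeriv' : ∀ x ∈ s, HasDerivWithinAt u' (-(V x + ξ) * u x - f x) s x

/-- The Wronskian `θ u' - θ' u`. -/
def wronskian (θ θ' u u' : ℝ → ℝ) (x : ℝ) : ℝ := θ x * u' x - θ' x * u x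

/-- The energy `v² + ξ u²` of `u` relative to a zero-energy solution `θ > 0`, where
`v = u' - (θ' / θ) u = θ (u / θ)'`. -/
def relEnergy (ξ : ℝ) (θ θ' u u' : ℝ → ℝ) (x : ℝ) : ℝ :=
  (wronskian θ θ' u u' x / θ x) ^ 2 + ξ * u x ^ 2

section Energy

variable {V f u u' θ θ' : ℝ → ℝ} {ξ a b g : ℝ} {s t : Set ℝ}

theorem SolvesOn.mono (hu : SolvesOn V ξ f u u' s) (hts : t ⊆ s) : SolvesOn V ξ f u u' t :=
  ⟨fun x hx => (hu.hasDeriv x (hts hx)).mono hts, fun x hx => (hu.hasDeriv' x (hts hx)).mono hts⟩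

theorem SolvesOn.sqrt_energy_le {c : ℝ} (hu : SolvesOn V ξ f u u' (Icc a b)) (hab : a ≤ b)
    (hξ : 0 ≤ ξ) (hc : 0 ≤ c) (hV : ∀ x ∈ Icc a b, |1 - V x| ≤ 2 * c)
    (hf : ∀ x ∈ Icc a b, |f x| ≤ g) :
    √(u' b ^ 2 + (ξ + 1) * u b ^ 2) ≤
      Real.exp (c * (b - a)) * (√(u' a ^ 2 + (ξ + 1) * u a ^ 2) + g * (b - a)) := by
  have hg : 0 ≤ g := (abs_nonneg _).trans (hf a (left_mem_Icc.2 hab))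
  have weighted := sqrt_div_le_of_deriv_le hab hg
    (E := fun x => u' x ^ 2 + (ξ + 1) * u x ^ 2) (w := fun x => Real.exp (c * (x - a)))
    (E' := fun x => 2 * u' x * (-(V x + ξ) * u x - f x) + (ξ + 1) * (2 * u x * u' x))
    (w' := fun x => Real.exp (c * (x - a)) * c)
    (fun x hx => (((hu.hasDeriv' x hx).pow 2).add
      (((hu.hasDeriv x hx).pow 2).const_mul (ξ + 1))).congr_deriv (by simp))
    (fun x _ => (((hasDerivWithinAt_id x _).sub_const a).const_mul c).exp.congr_deriv (by simp))
    (fun x _ => by positivity) (Real.exp_pos _) (fun x _ => by positivity) fun x hx => by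
      have source_le := neg_mul_le_mul_sqrt (v := u' x) (y := (ξ + 1) * u x ^ 2) (hf x hx)
        (by positivity)
      have potential_le : (1 - V x) * (2 * (u x * u' x)) ≤ 2 * c * (u x ^ 2 + u' x ^ 2) := by
        calc (1 - V x) * (2 * (u x * u' x)) ≤ |1 - V x| * |2 * (u x * u' x)| := by
              rw [← abs_mul]; exact le_abs_self _
          _ ≤ 2 * c * (u x ^ 2 + u' x ^ 2) := by
              gcongr
              · exact hV x hx
              · rw [← sq_abs (u x), ← sq_abs (u' x), abs_mul, abs_mul, abs_two, ← mul_assoc]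
                exact two_mul_le_add_sq _ _
      have : 0 ≤ c * (ξ * u x ^ 2) := by positivity
      rw [mul_div_cancel_left₀ c (Real.exp_pos _).ne']
      linarith
  simpa only [sub_self, mul_zero, Real.exp_zero, div_one, div_le_iff₀' (Real.exp_pos _)]
    using weighted

theorem SolvesOn.hasDeriv_wronskian (hu : SolvesOn V ξ f u u' s) (hθ : SolvesOn V 0 0 θ θ' s) :
    ∀ x ∈ s, HasDerivWithinAt (wronskian θ θ' u u') (-(θ x * (ξ * u x + f x))) s x :=
  fun x hx => (((hθ.hasDeriv x hx).mul (hu.hasDeriv' x hx)).sub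
    ((hθ.hasDeriv' x hx).mul (hu.hasDeriv x hx))).congr_deriv (by simp only [Pi.zero_apply]; ring)

theorem SolvesOn.sqrt_relEnergy_div_le (hu : SolvesOn V ξ f u u' (Icc a b))
    (hθ : SolvesOn V 0 0 θ θ' (Icc a b)) (hab : a ≤ b) (hξ : 0 ≤ ξ)
    (hpos : ∀ x ∈ Icc a b, 0 < θ x) (hmono : ∀ x ∈ Icc a b, 0 ≤ θ' x)
    (hf : ∀ x ∈ Icc a b, |f x| ≤ g) :
    √(relEnergy ξ θ θ' u u' b) / θ b ≤
      (√(relEnergy ξ θ θ' u u' a) + g * (b - a)) / θ a := by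
  have hg : 0 ≤ g := (abs_nonneg _).trans (hf a (left_mem_Icc.2 hab))
  have deriv_relEnergy : ∀ x ∈ Icc a b, HasDerivWithinAt (relEnergy ξ θ θ' u u')
      (2 * (θ' x / θ x) * (ξ * u x ^ 2 - (wronskian θ θ' u u' x / θ x) ^ 2)
        - 2 * (wronskian θ θ' u u' x / θ x * f x)) (Icc a b) x := by
    intro x hx
    have := (hpos x hx).ne'
    refine ((((hu.hasDeriv_wronskian hθ x hx).div (hθ.hasDeriv x hx) this).pow 2).add
      (((hu.hasDeriv x hx).pow 2).const_mul ξ)).congr_deriv ?_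
    have u'_eq : u' x = wronskian θ θ' u u' x / θ x + θ' x / θ x * u x := by
      simp only [wronskian]; field_simp; ring
    rw [u'_eq]
    simp only [Pi.div_apply, Nat.cast_ofNat, Nat.add_one_sub_one, pow_one]
    field_simp
    ring
  refine sqrt_div_le_of_deriv_le hab hg deriv_relEnergy hθ.hasDeriv
    (fun x _ => by unfold relEnergy; positivity) (hpos a (left_mem_Icc.2 hab)) hmono fun x hx => ?_
  have source_le := neg_mul_le_mul_sqrt (v := wronskian θ θ' u u' x / θ x) (y := ξ * u x ^ 2)
    (hf x hx) (by positivity)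
  have : 0 ≤ θ' x / θ x * (wronskian θ θ' u u' x / θ x) ^ 2 :=
    mul_nonneg (div_nonneg (hmono x hx) (hpos x hx).le) (sq_nonneg _)
  unfold relEnergy
  linarith

theorem abs_div_le_of_abs_wronskian_div_le
    (hu : ∀ x ∈ Icc a b, HasDerivWithinAt u (u' x) (Icc a b) x)
    (hθ : ∀ x ∈ Icc a b, HasDerivWithinAt θ (θ' x) (Icc a b) x) (hab : a ≤ b)
    (hpos : ∀ x ∈ Icc a b, 0 < θ x) (hmono : ∀ x ∈ Icc a b, 0 ≤ θ' x)
    (hg : ∀ x ∈ Icc a b, |wronskian θ θ' u u' x / θ x| ≤ g) :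
    |u b| / θ b ≤ (|u a| + g * (b - a)) / θ a := by
  have weighted := sqrt_div_le_of_deriv_le hab
    ((abs_nonneg _).trans (hg a (left_mem_Icc.2 hab)))
    (E := fun x => u x ^ 2) (E' := fun x => 2 * u x * u' x)
    (fun x hx => ((hu x hx).pow 2).congr_deriv (by simp)) hθ (fun x _ => sq_nonneg _)
    (hpos a (left_mem_Icc.2 hab)) hmono fun x hx => by
      have := (hpos x hx).ne'
      have cross_le := neg_mul_le_mul_sqrt (v := -u x) (hg x hx) le_rfl
      have u'_eq : u' x = wronskian θ θ' u u' x / θ x + θ' x / θ x * u x := by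
        simp only [wronskian]; field_simp; ring
      rw [u'_eq]
      simp only [neg_sq, add_zero] at cross_le
      linarith
  simpa only [Real.sqrt_sq_eq_abs] using weighted

theorem abs_wronskian_div_le_sqrt_relEnergy {x : ℝ} (hξ : 0 ≤ ξ) :
    |wronskian θ θ' u u' x / θ x| ≤ √(relEnergy ξ θ θ' u u' x) :=
  Real.abs_le_sqrt (le_add_of_nonneg_right (mul_nonneg hξ (sq_nonneg _)))

end Energy

/-- A zero-energy resonance of `-∂² - V` on the half-line: a bounded zero-energy solution `θ` with
`θ 0 = 0` which beyond `a` is nondecreasing and bounded below by `1 / M`. The number `M` also bounds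
`V` on `[0, a]`, `θ`, and `θ'` beyond `a`. -/
structure IsResonance (V θ θ' : ℝ → ℝ) (a M : ℝ) : Prop where
  solvesOn : SolvesOn V 0 0 θ θ' (Ici 0)
  map_zero : θ 0 = 0
  core_nonneg : 0 ≤ a
  abs_potential_le : ∀ x ∈ Icc 0 a, |V x| ≤ M
  abs_le : ∀ x, 0 ≤ x → |θ x| ≤ M
  one_le_mul : ∀ x, a ≤ x → 1 ≤ M * θ x
  deriv_mem : ∀ x, a ≤ x → θ' x ∈ Icc 0 M

/-- The growth factor of `√(u'² + (ξ + 1) u²)` across `[0, a]`. -/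
def coreConst (a M : ℝ) : ℝ := Real.exp ((1 + M) / 2 * a)

/-- The growth factor of `√ξ |u|` on the half-line, for solutions with `u 0 = 0`. -/
def energyConst (a M : ℝ) : ℝ := M ^ 2 * (M ^ 2 + 2) * coreConst a M

/-- The bound for `|u|`, uniform in `ξ > 0`, when `u` solves the homogeneous equation with
`u 0 = 0` and `u' 0 = 1`. -/
def supConst (a M : ℝ) : ℝ := energyConst a M + M ^ 2 * coreConst a M * (M ^ 2 * a + 1)

namespace IsResonance

variable {V θ θ' f u u' : ℝ → ℝ} {a M ξ g x R : ℝ}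

theorem bound_pos (h : IsResonance V θ θ' a M) : 0 < M := by
  have := (abs_nonneg _).trans (h.abs_le a h.core_nonneg)
  exact this.lt_of_ne fun hM => by
    have := h.one_le_mul a le_rfl
    rw [← hM] at this
    norm_num at this

theorem map_pos (h : IsResonance V θ θ' a M) (hx : a ≤ x) : 0 < θ x :=
  pos_of_mul_pos_right (one_pos.trans_le (h.one_le_mul x hx)) h.bound_pos.le

theorem div_le (h : IsResonance V θ θ' a M) (hx : a ≤ x) {c : ℝ} (hc : 0 ≤ c) :
    c / θ x ≤ M * c := by
  rw [div_le_iff₀ (h.map_pos hx)]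
  nlinarith [h.one_le_mul x hx]

theorem le_of_div_le (h : IsResonance V θ θ' a M) (hx : a ≤ x) {c d : ℝ} (hd : 0 ≤ d)
    (hcd : c / θ x ≤ d / θ a) : c ≤ M ^ 2 * d := by
  have θ_le : θ x ≤ M := (le_abs_self _).trans (h.abs_le x (h.core_nonneg.trans hx))
  calc c ≤ d / θ a * θ x := (div_le_iff₀ (h.map_pos hx)).1 hcd
    _ ≤ M * d * M := mul_le_mul (h.div_le le_rfl hd) θ_le (h.map_pos hx).le
      (mul_nonneg h.bound_pos.le hd)
    _ = M ^ 2 * d := by ring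

theorem one_le_sq (h : IsResonance V θ θ' a M) : 1 ≤ M ^ 2 := by
  calc 1 ≤ M * θ a := h.one_le_mul a le_rfl
    _ ≤ M * M := by
      gcongr
      · exact h.bound_pos.le
      · exact (le_abs_self _).trans (h.abs_le a h.core_nonneg)
    _ = M ^ 2 := by ring

theorem abs_sub_wronskian_div_le (h : IsResonance V θ θ' a M) (hx : a ≤ x) :
    |u' x - wronskian θ θ' u u' x / θ x| ≤ M ^ 2 * |u x| := by
  have hθ := h.map_pos hx
  obtain ⟨θ'_nonneg, θ'_le⟩ := h.deriv_mem x hx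
  calc |u' x - wronskian θ θ' u u' x / θ x| = |θ' x / θ x * u x| := by
        congr 1; simp only [wronskian]; field_simp; ring
    _ = θ' x / θ x * |u x| := by rw [abs_mul, abs_of_nonneg (div_nonneg θ'_nonneg hθ.le)]
    _ ≤ M * M * |u x| := by
      gcongr
      exact (h.div_le hx θ'_nonneg).trans (mul_le_mul_of_nonneg_left θ'_le h.bound_pos.le)
    _ = M ^ 2 * |u x| := by ring

theorem one_le_coreConst (h : IsResonance V θ θ' a M) : 1 ≤ coreConst a M :=
  Real.one_le_exp (mul_nonneg (by linarith [h.bound_pos]) h.core_nonneg)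

theorem coreConst_le_energyConst (h : IsResonance V θ θ' a M) :
    coreConst a M ≤ energyConst a M := by
  have := h.one_le_coreConst
  exact le_mul_of_one_le_left (by linarith) (by nlinarith [h.one_le_sq])

theorem energyConst_le_supConst (h : IsResonance V θ θ' a M) :
    energyConst a M ≤ supConst a M := by
  have := h.core_nonneg
  have := h.one_le_coreConst
  exact le_add_of_nonneg_right (by positivity)

theorem core_bounds (h : IsResonance V θ θ' a M) (hξ : 0 ≤ ξ) (hu : SolvesOn V ξ f u u' (Ici 0))
    (hu0 : u 0 = 0) (hx : x ∈ Icc 0 a) (hf : ∀ s ∈ Icc 0 x, |f s| ≤ g) :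
    |u' x| ≤ coreConst a M * (|u' 0| + g * x) ∧ |u x| ≤ coreConst a M * (|u' 0| + g * x) ∧
      √ξ * |u x| ≤ coreConst a M * (|u' 0| + g * x) := by
  obtain ⟨hx0, hxa⟩ := hx
  have hM := h.bound_pos
  have hg : 0 ≤ g := (abs_nonneg _).trans (hf 0 (left_mem_Icc.2 hx0))
  have energy_le : √(u' x ^ 2 + (ξ + 1) * u x ^ 2) ≤ coreConst a M * (|u' 0| + g * x) := by
    have := (hu.mono Icc_subset_Ici_self).sqrt_energy_le (c := (1 + M) / 2) hx0 hξ (by linarith)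
      (fun s hs => ?_) hf
    · rw [hu0, zero_pow two_ne_zero, mul_zero, add_zero, Real.sqrt_sq_eq_abs, sub_zero] at this
      refine this.trans ?_
      unfold coreConst
      gcongr
    · have := abs_sub 1 (V s)
      rw [abs_one] at this
      linarith [h.abs_potential_le s ⟨hs.1, hs.2.trans hxa⟩]
  have u_le := (sqrt_mul_abs_le_sqrt (y := u x) (u' x) (by linarith : 0 ≤ ξ + 1)).trans energy_le
  refine ⟨(Real.abs_le_sqrt ?_).trans energy_le, ?_, ?_⟩
  · nlinarith [sq_nonneg (u x)]
  · exact (le_mul_of_one_le_left (abs_nonneg _) (Real.one_le_sqrt.2 (by linarith))).trans u_le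
  · refine le_trans ?_ u_le
    gcongr
    linarith

theorem sqrt_relEnergy_le (h : IsResonance V θ θ' a M) (hξ : 0 ≤ ξ)
    (hu : SolvesOn V ξ f u u' (Ici 0)) (hx : a ≤ x) (hf : ∀ s ∈ Icc a x, |f s| ≤ g) :
    √(relEnergy ξ θ θ' u u' x) ≤ M ^ 2 * (√(relEnergy ξ θ θ' u u' a) + g * (x - a)) := by
  have hg : 0 ≤ g := (abs_nonneg _).trans (hf a (left_mem_Icc.2 hx))
  have hsub : Icc a x ⊆ Ici 0 := fun s hs => h.core_nonneg.trans hs.1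
  exact h.le_of_div_le hx (add_nonneg (Real.sqrt_nonneg _) (mul_nonneg hg (sub_nonneg.2 hx)))
    ((hu.mono hsub).sqrt_relEnergy_div_le (h.solvesOn.mono hsub) hx hξ
      (fun s hs => h.map_pos hs.1) (fun s hs => (h.deriv_mem s hs.1).1) hf)

theorem sqrt_relEnergy_le_of_abs_le (h : IsResonance V θ θ' a M) (hξ : 0 ≤ ξ) (hx : a ≤ x) {b : ℝ}
    (hu' : |u' x| ≤ b) (hu : |u x| ≤ b) (hsqrt : √ξ * |u x| ≤ b) :
    √(relEnergy ξ θ θ' u u' x) ≤ (M ^ 2 + 2) * b := by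
  have v_sub_le := h.abs_sub_wronskian_div_le (u := u) (u' := u') hx
  rw [abs_sub_comm] at v_sub_le
  calc √(relEnergy ξ θ θ' u u' x) ≤ |wronskian θ θ' u u' x / θ x| + √ξ * |u x| :=
        sqrt_sq_add_mul_sq_le _ _ hξ
    _ ≤ (b + M ^ 2 * |u x|) + b := by
        linarith [abs_sub_abs_le_abs_sub (wronskian θ θ' u u' x / θ x) (u' x)]
    _ ≤ (b + M ^ 2 * b) + b := by gcongr
    _ = (M ^ 2 + 2) * b := by ring

theorem sqrt_relEnergy_le_energyConst (h : IsResonance V θ θ' a M) (hξ : 0 ≤ ξ)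
    (hu : SolvesOn V ξ f u u' (Ici 0)) (hu0 : u 0 = 0) (hx : a ≤ x)
    (hf : ∀ s ∈ Icc 0 x, |f s| ≤ g) :
    √(relEnergy ξ θ θ' u u' x) ≤ energyConst a M * (|u' 0| + g * x) := by
  have ha := h.core_nonneg
  have hg : 0 ≤ g := (abs_nonneg _).trans (hf 0 (left_mem_Icc.2 (ha.trans hx)))
  have hK := h.one_le_coreConst
  obtain ⟨u'_le, u_le, sqrt_u_le⟩ := h.core_bounds hξ hu hu0 (right_mem_Icc.2 ha)
    fun s hs => hf s ⟨hs.1, hs.2.trans hx⟩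
  set b := coreConst a M * (|u' 0| + g * a) with hb
  have at_a := h.sqrt_relEnergy_le_of_abs_le hξ le_rfl u'_le u_le sqrt_u_le
  have source_le : g * (x - a) ≤ (M ^ 2 + 2) * (coreConst a M * (g * (x - a))) := by
    rw [← mul_assoc]
    have : 0 ≤ g * (x - a) := mul_nonneg hg (by linarith)
    exact le_mul_of_one_le_left this (by nlinarith [sq_nonneg M])
  calc √(relEnergy ξ θ θ' u u' x)
      ≤ M ^ 2 * (√(relEnergy ξ θ θ' u u' a) + g * (x - a)) :=
        h.sqrt_relEnergy_le hξ hu hx fun s hs => hf s ⟨ha.trans hs.1, hs.2⟩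
    _ ≤ M ^ 2 * ((M ^ 2 + 2) * b + (M ^ 2 + 2) * (coreConst a M * (g * (x - a)))) := by gcongr
    _ = energyConst a M * (|u' 0| + g * x) := by rw [hb, energyConst]; ring

theorem sqrt_mul_abs_le (h : IsResonance V θ θ' a M) (hξ : 0 ≤ ξ)
    (hu : SolvesOn V ξ f u u' (Ici 0)) (hu0 : u 0 = 0) (hx : 0 ≤ x)
    (hf : ∀ s ∈ Icc 0 x, |f s| ≤ g) :
    √ξ * |u x| ≤ energyConst a M * (|u' 0| + g * x) := by
  have hg : 0 ≤ g := (abs_nonneg _).trans (hf 0 (left_mem_Icc.2 hx))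
  rcases le_total x a with hxa | hax
  · refine (h.core_bounds hξ hu hu0 ⟨hx, hxa⟩ hf).2.2.trans ?_
    gcongr
    exact h.coreConst_le_energyConst
  · exact (sqrt_mul_abs_le_sqrt _ hξ).trans (h.sqrt_relEnergy_le_energyConst hξ hu hu0 hax hf)

theorem abs_le_mul (h : IsResonance V θ θ' a M) (hξ : 0 ≤ ξ)
    (hu : SolvesOn V ξ f u u' (Ici 0)) (hu0 : u 0 = 0) (hx : 0 ≤ x)
    (hf : ∀ s ∈ Icc 0 x, |f s| ≤ g) :
    |u x| ≤ M ^ 2 * energyConst a M * (|u' 0| + g * x) * x := by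
  have hg : 0 ≤ g := (abs_nonneg _).trans (hf 0 (left_mem_Icc.2 hx))
  have hM := h.one_le_sq
  have hK := h.one_le_coreConst
  have hKE := h.coreConst_le_energyConst
  have hE : 0 ≤ energyConst a M := by linarith
  have core_le : ∀ s ∈ Icc 0 x, s ≤ a → |u s| ≤ energyConst a M * (|u' 0| + g * x) * s := by
    intro s hs hsa
    refine abs_le_mul_of_abs_deriv_le hs.1 (hu.mono Icc_subset_Ici_self).hasDeriv hu0 fun t ht => ?_
    have htx := ht.2.trans hs.2
    refine (h.core_bounds hξ hu hu0 ⟨ht.1, ht.2.trans hsa⟩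
      fun r hr => hf r ⟨hr.1, hr.2.trans htx⟩).1.trans ?_
    have := ht.1
    gcongr
  rcases le_total x a with hxa | hax
  · refine (core_le x (right_mem_Icc.2 hx) hxa).trans ?_
    rw [mul_assoc, mul_assoc, mul_assoc]
    exact le_mul_of_one_le_left (by positivity) hM
  · have ha := h.core_nonneg
    have hsub : Icc a x ⊆ Ici 0 := fun s hs => ha.trans hs.1
    set G := energyConst a M * (|u' 0| + g * x) with hG
    have v_le : ∀ s ∈ Icc a x, |wronskian θ θ' u u' s / θ s| ≤ G := by
      intro s hs
      have hsx := hs.2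
      calc |wronskian θ θ' u u' s / θ s| ≤ √(relEnergy ξ θ θ' u u' s) :=
            abs_wronskian_div_le_sqrt_relEnergy hξ
        _ ≤ energyConst a M * (|u' 0| + g * s) :=
            h.sqrt_relEnergy_le_energyConst hξ hu hu0 hs.1 fun r hr => hf r ⟨hr.1, hr.2.trans hsx⟩
        _ ≤ G := by rw [hG]; gcongr
    have hG0 : 0 ≤ G := (abs_nonneg _).trans (v_le a (left_mem_Icc.2 hax))
    calc |u x| ≤ M ^ 2 * (|u a| + G * (x - a)) :=
          h.le_of_div_le hax (add_nonneg (abs_nonneg _) (mul_nonneg hG0 (sub_nonneg.2 hax)))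
            (abs_div_le_of_abs_wronskian_div_le (hu.mono hsub).hasDeriv
              (h.solvesOn.mono hsub).hasDeriv hax (fun s hs => h.map_pos hs.1)
              (fun s hs => (h.deriv_mem s hs.1).1) v_le)
      _ ≤ M ^ 2 * (G * a + G * (x - a)) := by gcongr; exact core_le a ⟨ha, hax⟩ le_rfl
      _ = M ^ 2 * energyConst a M * (|u' 0| + g * x) * x := by rw [hG]; ring

end IsResonance

section DividedDifferences

variable {f : ℝ → ℝ} {J : Set ℝ} {ξ M : ℝ}

theorem abs_deriv_le_of_abs_slope_le (hJ : IsOpen J) (hξ : ξ ∈ J) (hM : 0 ≤ M)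
    (hf : ∀ ζ ∈ J, ζ ≠ ξ → |slope f ξ ζ| ≤ M) : |deriv f ξ| ≤ M := by
  rw [← Real.norm_eq_abs]
  refine norm_deriv_le_of_lip' (f := f) hM ?_
  filter_upwards [hJ.mem_nhds hξ] with ζ hζ
  rcases eq_or_ne ζ ξ with rfl | hne
  · simp
  · have := hf ζ hζ hne
    rwa [slope_def_field, abs_div, div_le_iff₀ (abs_pos.2 (sub_ne_zero.2 hne))] at this

theorem abs_slope_sub_slope_le {ζ η : ℝ}
    (hf : ζ ≠ η → |slope (slope f ξ) η ζ| ≤ M) : |slope f ξ ζ - slope f ξ η| ≤ M * |ζ - η| := by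
  rcases eq_or_ne ζ η with rfl | hne
  · simp
  · have := hf hne
    rwa [slope_def_field, abs_div, div_le_iff₀ (abs_pos.2 (sub_ne_zero.2 hne))] at this

theorem differentiableAt_of_abs_slope_slope_le (hJ : IsOpen J) (hξ : ξ ∈ J) (hM : 0 ≤ M)
    (hf : ∀ ζ ∈ J, ∀ η ∈ J, ζ ≠ ξ → η ≠ ξ → ζ ≠ η → |slope (slope f ξ) η ζ| ≤ M) :
    DifferentiableAt ℝ f ξ := by
  have slope_lipschitz : LipschitzOnWith M.toNNReal (slope f ξ) (J \ {ξ}) := by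
    refine .of_dist_le_mul fun ζ hζ η hη => ?_
    rw [Real.coe_toNNReal _ hM]
    exact abs_slope_sub_slope_le (hf ζ hζ.1 η hη.1 hζ.2 hη.2)
  obtain ⟨F, F_lipschitz, slope_eq⟩ := slope_lipschitz.extend_real
  have F_tendsto : Tendsto F (𝓝[≠] ξ) (𝓝 (F ξ)) := F_lipschitz.continuous.continuousWithinAt
  refine (hasDerivAt_iff_tendsto_slope.2 (F_tendsto.congr' ?_)).differentiableAt
  filter_upwards [self_mem_nhdsWithin, nhdsWithin_le_nhds (hJ.mem_nhds hξ)] with ζ hne hζ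
  exact (slope_eq ⟨hζ, hne⟩).symm

theorem abs_slope_sub_deriv_le (hJ : IsOpen J) (hξ : ξ ∈ J) (hM : 0 ≤ M)
    (hf : ∀ ζ ∈ J, ∀ η ∈ J, ζ ≠ ξ → η ≠ ξ → ζ ≠ η → |slope (slope f ξ) η ζ| ≤ M)
    {ζ : ℝ} (hζ : ζ ∈ J) (hne : ζ ≠ ξ) : |slope f ξ ζ - deriv f ξ| ≤ M * |ζ - ξ| := by
  have slope_tendsto := hasDerivAt_iff_tendsto_slope.1
    (differentiableAt_of_abs_slope_slope_le hJ hξ hM hf).hasDerivAt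
  have bound_tendsto : Tendsto (fun η => M * |ζ - η|) (𝓝[≠] ξ) (𝓝 (M * |ζ - ξ|)) :=
    Continuous.continuousWithinAt (by fun_prop)
  refine le_of_tendsto_of_tendsto (tendsto_const_nhds.sub slope_tendsto).abs bound_tendsto ?_
  filter_upwards [self_mem_nhdsWithin, nhdsWithin_le_nhds (hJ.mem_nhds hξ)] with η hη_ne hη
  exact abs_slope_sub_slope_le (hf ζ hζ η hη hne hη_ne)

theorem abs_deriv_deriv_le_of_abs_slope_slope_le (hJ : IsOpen J) (hξ : ξ ∈ J) (hM : 0 ≤ M)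
    (hf : ∀ ξ ∈ J, ∀ ζ ∈ J, ∀ η ∈ J, ζ ≠ ξ → η ≠ ξ → ζ ≠ η → |slope (slope f ξ) η ζ| ≤ M) :
    |deriv (deriv f) ξ| ≤ 2 * M := by
  refine abs_deriv_le_of_abs_slope_le hJ hξ (by positivity) fun ζ hζ hne => ?_
  have at_ξ := abs_slope_sub_deriv_le hJ hξ hM (hf ξ hξ) hζ hne
  have at_ζ := abs_slope_sub_deriv_le hJ hζ hM (hf ζ hζ) hξ hne.symm
  rw [slope_comm, abs_sub_comm ξ ζ, abs_sub_comm] at at_ζ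
  rw [slope_def_field, abs_div, div_le_iff₀ (abs_pos.2 (sub_ne_zero.2 hne))]
  calc |deriv f ζ - deriv f ξ| ≤ |deriv f ζ - slope f ξ ζ| + |slope f ξ ζ - deriv f ξ| :=
        abs_sub_le _ _ _
    _ ≤ 2 * M * |ζ - ξ| := by linarith

end DividedDifferences

/-- `u`, with derivative `u'`, is the regular solution of `-u'' - V u = ξ u` on the half-line. -/
structure IsRegularSolution (V : ℝ → ℝ) (ξ : ℝ) (u u' : ℝ → ℝ) : Prop where
  solvesOn : SolvesOn V ξ 0 u u' (Ici 0)
  map_zero : u 0 = 0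
  deriv_zero : u' 0 = 1

/-- The common constant of all bounds on regular solutions and on the inhomogeneous problem. -/
def boundConst (a M : ℝ) : ℝ := energyConst a M + M ^ 2 * supConst a M

/-- For all `ξ ∈ J`, the solution operator `f ↦ u` of `-u'' - V u = ξ u + f`, `u 0 = u' 0 = 0`, has
norm at most `k` on `C([0, R])`. -/
def VolterraBound (V : ℝ → ℝ) (J : Set ℝ) (R k : ℝ) : Prop :=
  ∀ ⦃ξ⦄, ξ ∈ J → ∀ ⦃f u u' : ℝ → ℝ⦄ ⦃g : ℝ⦄, SolvesOn V ξ f u u' (Ici 0) → u 0 = 0 → u' 0 = 0 →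
    (∀ x ∈ Icc 0 R, |f x| ≤ g) → ∀ x ∈ Icc 0 R, |u x| ≤ k * g

theorem sqrt_div_two_le_sqrt {ξ ζ : ℝ} (hξ : 0 ≤ ξ) (hζ : ζ ∈ Ioi (ξ / 4)) : √ξ / 2 ≤ √ζ := by
  refine Real.le_sqrt_of_sq_le ?_
  rw [div_pow, Real.sq_sqrt hξ]
  linarith [mem_Ioi.1 hζ]

theorem le_two_mul_div_sqrt {ξ ζ y b : ℝ} (hξ : 0 < ξ) (hζ : ζ ∈ Ioi (ξ / 4)) (hy : 0 ≤ y)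
    (h : √ζ * y ≤ b) : y ≤ 2 * (b / √ξ) := by
  rw [← mul_div_assoc, le_div_iff₀ (Real.sqrt_pos.2 hξ)]
  linarith [mul_le_mul_of_nonneg_right (sqrt_div_two_le_sqrt hξ.le hζ) hy]

namespace IsResonance

variable {V θ θ' u u' : ℝ → ℝ} {a M ξ ζ x R : ℝ}

theorem abs_wronskian_le (h : IsResonance V θ θ' a M) (hξ : 0 ≤ ξ)
    (hu : SolvesOn V ξ 0 u u' (Ici 0)) (hu0 : u 0 = 0) {b : ℝ} (hb : ∀ x ∈ Icc 0 a, |u x| ≤ b) :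
    |wronskian θ θ' u u' a| ≤ M * (ξ * b) * a := by
  refine abs_le_mul_of_abs_deriv_le h.core_nonneg
    ((hu.mono Icc_subset_Ici_self).hasDeriv_wronskian (h.solvesOn.mono Icc_subset_Ici_self))
    (by simp [wronskian, hu0, h.map_zero]) fun x hx => ?_
  rw [Pi.zero_apply, add_zero, abs_neg, abs_mul, abs_mul, abs_of_nonneg hξ]
  have := h.bound_pos
  gcongr
  · exact h.abs_le x hx.1
  · exact hb x hx

/-- The Wronskian with the resonance is `O(ξ)` at `a`, which pays for the `√ξ` in the energy. -/
theorem abs_le_of_le_one (h : IsResonance V θ θ' a M) (hξ : 0 < ξ) (hξ1 : ξ ≤ 1)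
    (hu : IsRegularSolution V ξ u u') (hx : a ≤ x) :
    |u x| ≤ M ^ 2 * coreConst a M * (M ^ 2 * a + 1) := by
  have ha := h.core_nonneg
  have hK := h.one_le_coreConst
  have core_le : ∀ s ∈ Icc 0 a, |u s| ≤ coreConst a M := fun s hs => by
    simpa [hu.deriv_zero] using
      (h.core_bounds (g := 0) hξ.le hu.solvesOn hu.map_zero hs (by simp)).2.1
  have ξ_le : ξ ≤ √ξ := Real.le_sqrt_of_sq_le (by nlinarith)
  have v_le : |wronskian θ θ' u u' a / θ a| ≤ √ξ * coreConst a M * (M ^ 2 * a) := by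
    rw [abs_div, abs_of_pos (h.map_pos le_rfl)]
    calc |wronskian θ θ' u u' a| / θ a ≤ M * (M * (ξ * coreConst a M) * a) :=
          (h.div_le le_rfl (abs_nonneg _)).trans (mul_le_mul_of_nonneg_left
            (h.abs_wronskian_le hξ.le hu.solvesOn hu.map_zero core_le) h.bound_pos.le)
      _ = ξ * coreConst a M * (M ^ 2 * a) := by ring
      _ ≤ √ξ * coreConst a M * (M ^ 2 * a) := by gcongr
  refine le_of_mul_le_mul_left ?_ (Real.sqrt_pos.2 hξ)
  calc √ξ * |u x| ≤ √(relEnergy ξ θ θ' u u' x) := sqrt_mul_abs_le_sqrt _ hξ.le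
    _ ≤ M ^ 2 * √(relEnergy ξ θ θ' u u' a) := by
        simpa using h.sqrt_relEnergy_le (g := 0) hξ.le hu.solvesOn hx (by simp)
    _ ≤ M ^ 2 * (|wronskian θ θ' u u' a / θ a| + √ξ * |u a|) := by
        gcongr; exact sqrt_sq_add_mul_sq_le _ _ hξ.le
    _ ≤ M ^ 2 * (√ξ * coreConst a M * (M ^ 2 * a) + √ξ * coreConst a M) := by
        gcongr; exact core_le a (right_mem_Icc.2 ha)
    _ = √ξ * (M ^ 2 * coreConst a M * (M ^ 2 * a + 1)) := by ring

theorem sqrt_mul_abs_le_energyConst (h : IsResonance V θ θ' a M) (hξ : 0 ≤ ξ)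
    (hu : IsRegularSolution V ξ u u') (hx : 0 ≤ x) : √ξ * |u x| ≤ energyConst a M := by
  simpa [hu.deriv_zero] using
    h.sqrt_mul_abs_le (g := 0) hξ hu.solvesOn hu.map_zero hx (by simp)

theorem abs_le_supConst (h : IsResonance V θ θ' a M) (hξ : 0 < ξ)
    (hu : IsRegularSolution V ξ u u') (hx : 0 ≤ x) : |u x| ≤ supConst a M := by
  have hK := h.one_le_coreConst
  have hKE := h.coreConst_le_energyConst
  have hES := h.energyConst_le_supConst
  rcases le_total 1 ξ with hξ1 | hξ1
  · calc |u x| ≤ √ξ * |u x| := le_mul_of_one_le_left (abs_nonneg _) (Real.one_le_sqrt.2 hξ1)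
      _ ≤ energyConst a M := h.sqrt_mul_abs_le_energyConst hξ.le hu hx
      _ ≤ supConst a M := hES
  rcases le_total x a with hxa | hax
  · have := (h.core_bounds (g := 0) hξ.le hu.solvesOn hu.map_zero ⟨hx, hxa⟩ (by simp)).2.1
    rw [hu.deriv_zero, abs_one, zero_mul, add_zero, mul_one] at this
    linarith
  · exact (h.abs_le_of_le_one hξ hξ1 hu hax).trans (le_add_of_nonneg_left (by linarith))

theorem sq_mul_energyConst_le_boundConst (h : IsResonance V θ θ' a M) :
    M ^ 2 * energyConst a M ≤ boundConst a M := by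
  have := h.one_le_coreConst
  have := h.coreConst_le_energyConst
  calc M ^ 2 * energyConst a M ≤ M ^ 2 * supConst a M := by
        gcongr; exact h.energyConst_le_supConst
    _ ≤ boundConst a M := le_add_of_nonneg_left (by linarith)

theorem one_le_boundConst (h : IsResonance V θ θ' a M) : 1 ≤ boundConst a M := by
  nlinarith [h.one_le_sq, h.one_le_coreConst, h.coreConst_le_energyConst,
    h.sq_mul_energyConst_le_boundConst]

theorem energyConst_le_boundConst (h : IsResonance V θ θ' a M) :
    energyConst a M ≤ boundConst a M := by
  nlinarith [h.one_le_sq, h.one_le_coreConst, h.coreConst_le_energyConst,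
    h.sq_mul_energyConst_le_boundConst]

theorem abs_le_boundConst (h : IsResonance V θ θ' a M) (hξ : 0 < ξ)
    (hu : IsRegularSolution V ξ u u') (hx : 0 ≤ x) : |u x| ≤ boundConst a M := by
  have := h.abs_le_supConst hξ hu hx
  have : 0 ≤ supConst a M := (abs_nonneg _).trans this
  have := h.one_le_coreConst
  have := h.coreConst_le_energyConst
  unfold boundConst
  nlinarith [h.one_le_sq]

theorem abs_le_boundConst_mul (h : IsResonance V θ θ' a M) (hξ : 0 ≤ ξ)
    (hu : IsRegularSolution V ξ u u') (hx : 0 ≤ x) : |u x| ≤ boundConst a M * x := by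
  have u_le := h.abs_le_mul (g := 0) hξ hu.solvesOn hu.map_zero hx (by simp)
  rw [hu.deriv_zero, abs_one, zero_mul, add_zero, mul_one] at u_le
  exact u_le.trans (mul_le_mul_of_nonneg_right h.sq_mul_energyConst_le_boundConst hx)

theorem abs_deriv_le_boundConst (h : IsResonance V θ θ' a M) (hξ : 0 < ξ)
    (hu : IsRegularSolution V ξ u u') (hx : 0 ≤ x) : |u' x| ≤ boundConst a M := by
  have sup_le := h.abs_le_supConst hξ hu hx
  have : 0 ≤ supConst a M := (abs_nonneg _).trans sup_le
  rcases le_total x a with hxa | hax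
  · have u'_le :=
      (h.core_bounds (g := 0) hξ.le hu.solvesOn hu.map_zero ⟨hx, hxa⟩ (by simp)).1
    rw [hu.deriv_zero, abs_one, zero_mul, add_zero, mul_one] at u'_le
    exact (u'_le.trans h.coreConst_le_energyConst).trans h.energyConst_le_boundConst
  · have v_le : |wronskian θ θ' u u' x / θ x| ≤ energyConst a M := by
      refine (abs_wronskian_div_le_sqrt_relEnergy hξ.le).trans ?_
      simpa [hu.deriv_zero] using
        h.sqrt_relEnergy_le_energyConst (g := 0) hξ.le hu.solvesOn hu.map_zero hax (by simp)
    calc |u' x| ≤ |wronskian θ θ' u u' x / θ x| + |u' x - wronskian θ θ' u u' x / θ x| := by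
          linarith [abs_sub_abs_le_abs_sub (u' x) (wronskian θ θ' u u' x / θ x)]
      _ ≤ energyConst a M + M ^ 2 * |u x| := add_le_add v_le (h.abs_sub_wronskian_div_le hax)
      _ ≤ boundConst a M := by unfold boundConst; gcongr

theorem abs_le_boundConst_div_sqrt (h : IsResonance V θ θ' a M) (hξ : 0 < ξ)
    (hu : IsRegularSolution V ξ u u') (hx : 0 ≤ x) : |u x| ≤ boundConst a M / √ξ := by
  rw [le_div_iff₀' (Real.sqrt_pos.2 hξ)]
  exact (h.sqrt_mul_abs_le_energyConst hξ.le hu hx).trans h.energyConst_le_boundConst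

theorem abs_le_two_mul_boundConst_mul_min (h : IsResonance V θ θ' a M) (hξ : 0 < ξ)
    (hζ : ζ ∈ Ioi (ξ / 4)) (hu : IsRegularSolution V ζ u u') (hx : x ∈ Icc 0 R) :
    |u x| ≤ 2 * boundConst a M * min (1 / √ξ) R := by
  have hB := h.one_le_boundConst
  have hζ0 : 0 ≤ ζ := by linarith [mem_Ioi.1 hζ]
  rw [mul_min_of_nonneg _ _ (by positivity), le_min_iff]
  constructor
  · calc |u x| ≤ 2 * (boundConst a M / √ξ) := le_two_mul_div_sqrt hξ hζ (abs_nonneg _)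
          ((h.sqrt_mul_abs_le_energyConst hζ0 hu hx.1).trans h.energyConst_le_boundConst)
      _ = 2 * boundConst a M * (1 / √ξ) := by ring
  · calc |u x| ≤ boundConst a M * x := h.abs_le_boundConst_mul hζ0 hu hx.1
      _ ≤ 2 * boundConst a M * R :=
        mul_le_mul (by linarith) hx.2 hx.1 (by linarith)

theorem volterraBound_sq (h : IsResonance V θ θ' a M) :
    VolterraBound V (Ici 0) R (boundConst a M * R ^ 2) := by
  rintro ζ (hζ : 0 ≤ ζ) f u u' g hu hu0 hu0' hf x ⟨hx0, hxR⟩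
  have hg : 0 ≤ g := (abs_nonneg _).trans (hf x ⟨hx0, hxR⟩)
  have hB := h.one_le_boundConst
  calc |u x| ≤ M ^ 2 * energyConst a M * (|u' 0| + g * x) * x :=
        h.abs_le_mul hζ hu hu0 hx0 fun s hs => hf s ⟨hs.1, hs.2.trans hxR⟩
    _ = M ^ 2 * energyConst a M * x ^ 2 * g := by rw [hu0', abs_zero]; ring
    _ ≤ boundConst a M * R ^ 2 * g := by gcongr; exact h.sq_mul_energyConst_le_boundConst

theorem volterraBound_div_sqrt (h : IsResonance V θ θ' a M) (hξ : 0 < ξ) :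
    VolterraBound V (Ioi (ξ / 4)) R (2 * boundConst a M * (R / √ξ)) := by
  intro ζ hζ f u u' g hu hu0 hu0' hf x ⟨hx0, hxR⟩
  have hg : 0 ≤ g := (abs_nonneg _).trans (hf x ⟨hx0, hxR⟩)
  have hB := h.one_le_boundConst
  have hζ0 : 0 ≤ ζ := by linarith [mem_Ioi.1 hζ]
  have weighted : √ζ * |u x| ≤ boundConst a M * (g * R) := calc
    √ζ * |u x| ≤ energyConst a M * (|u' 0| + g * x) :=
      h.sqrt_mul_abs_le hζ0 hu hu0 hx0 fun s hs => hf s ⟨hs.1, hs.2.trans hxR⟩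
    _ ≤ boundConst a M * (g * R) := by
      rw [hu0', abs_zero, zero_add]; gcongr; exact h.energyConst_le_boundConst
  calc |u x| ≤ 2 * (boundConst a M * (g * R) / √ξ) :=
        le_two_mul_div_sqrt hξ hζ (abs_nonneg _) weighted
    _ = 2 * boundConst a M * (R / √ξ) * g := by ring

end IsResonance

theorem VolterraBound.mono {V : ℝ → ℝ} {I J : Set ℝ} {R k l : ℝ} (hk : VolterraBound V J R k)
    (hIJ : I ⊆ J) (hkl : k ≤ l) : VolterraBound V I R l :=
  fun _ hξ _ _ _ _ hu hu0 hu0' hf x hx => (hk (hIJ hξ) hu hu0 hu0' hf x hx).trans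
    (mul_le_mul_of_nonneg_right hkl ((abs_nonneg _).trans (hf x hx)))

theorem IsResonance.volterraBound_min {V θ θ' : ℝ → ℝ} {a M ξ R : ℝ}
    (h : IsResonance V θ θ' a M) (hξ : 0 < ξ) :
    VolterraBound V (Ioi (ξ / 4)) R (2 * boundConst a M * min (R / √ξ) (R ^ 2)) := by
  have hB := h.one_le_boundConst
  rcases min_choice (R / √ξ) (R ^ 2) with hmin | hmin <;> rw [hmin]
  · exact h.volterraBound_div_sqrt hξ
  · refine h.volterraBound_sq.mono (fun ζ hζ => ?_) (by gcongr; linarith)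
    exact mem_Ici.2 (by linarith [mem_Ioi.1 hζ])

section SpectralDerivatives

variable {V : ℝ → ℝ} {s : Set ℝ} {ξ η ζ : ℝ}

theorem SolvesOn.slope_source {f u u' : ℝ → ℝ → ℝ} (hη : SolvesOn V ξ (f η) (u η) (u' η) s)
    (hζ : SolvesOn V ξ (f ζ) (u ζ) (u' ζ) s) :
    SolvesOn V ξ (fun x => slope (f · x) η ζ) (fun x => slope (u · x) η ζ)
      (fun x => slope (u' · x) η ζ) s := by
  simp only [slope_def_field]
  exact ⟨fun x hx => ((hζ.hasDeriv x hx).sub (hη.hasDeriv x hx)).div_const _, fun x hx =>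
    (((hζ.hasDeriv' x hx).sub (hη.hasDeriv' x hx)).div_const _).congr_deriv (by ring)⟩

theorem SolvesOn.slope_energy {u u' : ℝ → ℝ → ℝ} (hξ : SolvesOn V ξ 0 (u ξ) (u' ξ) s)
    (hζ : SolvesOn V ζ 0 (u ζ) (u' ζ) s) (hne : ζ ≠ ξ) :
    SolvesOn V ξ (u ζ) (fun x => slope (u · x) ξ ζ) (fun x => slope (u' · x) ξ ζ) s := by
  have := sub_ne_zero.2 hne
  simp only [slope_def_field]
  refine ⟨fun x hx => ((hζ.hasDeriv x hx).sub (hξ.hasDeriv x hx)).div_const _, fun x hx =>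
    (((hζ.hasDeriv' x hx).sub (hξ.hasDeriv' x hx)).div_const _).congr_deriv ?_⟩
  simp only [Pi.zero_apply]
  field_simp
  ring

variable {φ φ' : ℝ → ℝ → ℝ} {J : Set ℝ} {R k g x : ℝ}

theorem VolterraBound.abs_slope_le (hk : VolterraBound V J R k)
    (hφ : ∀ ζ ∈ J, IsRegularSolution V ζ (φ ζ) (φ' ζ))
    (hg : ∀ ζ ∈ J, ∀ x ∈ Icc 0 R, |φ ζ x| ≤ g) (hξ : ξ ∈ J) (hζ : ζ ∈ J) (hne : ζ ≠ ξ)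
    (hx : x ∈ Icc 0 R) : |slope (φ · x) ξ ζ| ≤ k * g := by
  have hφξ := hφ ξ hξ
  have hφζ := hφ ζ hζ
  exact hk hξ (hφξ.solvesOn.slope_energy hφζ.solvesOn hne)
    (by simp [slope_def_field, hφξ.map_zero, hφζ.map_zero])
    (by simp [slope_def_field, hφξ.deriv_zero, hφζ.deriv_zero]) (hg ζ hζ) x hx

theorem VolterraBound.abs_slope_slope_le (hk : VolterraBound V J R k)
    (hφ : ∀ ζ ∈ J, IsRegularSolution V ζ (φ ζ) (φ' ζ))
    (hg : ∀ ζ ∈ J, ∀ x ∈ Icc 0 R, |φ ζ x| ≤ g) (hξ : ξ ∈ J) (hζ : ζ ∈ J) (hη : η ∈ J)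
    (hζξ : ζ ≠ ξ) (hηξ : η ≠ ξ) (hζη : ζ ≠ η) (hx : x ∈ Icc 0 R) :
    |slope (slope (φ · x) ξ) η ζ| ≤ k * (k * g) := by
  have hφξ := hφ ξ hξ
  have hφζ := hφ ζ hζ
  have hφη := hφ η hη
  exact hk hξ
    (SolvesOn.slope_source (f := φ) (u := fun ω x => slope (φ · x) ξ ω)
      (u' := fun ω x => slope (φ' · x) ξ ω)
      (hφξ.solvesOn.slope_energy hφη.solvesOn hηξ) (hφξ.solvesOn.slope_energy hφζ.solvesOn hζξ))
    (by simp [slope_def_field, hφξ.map_zero, hφζ.map_zero, hφη.map_zero])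
    (by simp [slope_def_field, hφξ.deriv_zero, hφζ.deriv_zero, hφη.deriv_zero])
    (fun s hs => hk.abs_slope_le hφ hg hη hζ hζη hs) x hx

theorem VolterraBound.abs_deriv_le (hk : VolterraBound V J R k) (hJ : IsOpen J) (hξ : ξ ∈ J)
    (hR : 0 ≤ R) (hk0 : 0 ≤ k) (hφ : ∀ ζ ∈ J, IsRegularSolution V ζ (φ ζ) (φ' ζ))
    (hg : ∀ ζ ∈ J, ∀ x ∈ Icc 0 R, |φ ζ x| ≤ g) : |deriv (φ · R) ξ| ≤ k * g := by
  have hR' := right_mem_Icc.2 hR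
  have hg0 : 0 ≤ g := (abs_nonneg _).trans (hg ξ hξ R hR')
  exact abs_deriv_le_of_abs_slope_le hJ hξ (by positivity)
    fun ζ hζ hne => hk.abs_slope_le hφ hg hξ hζ hne hR'

theorem VolterraBound.abs_deriv_deriv_le (hk : VolterraBound V J R k) (hJ : IsOpen J)
    (hξ : ξ ∈ J) (hR : 0 ≤ R) (hk0 : 0 ≤ k) (hφ : ∀ ζ ∈ J, IsRegularSolution V ζ (φ ζ) (φ' ζ))
    (hg : ∀ ζ ∈ J, ∀ x ∈ Icc 0 R, |φ ζ x| ≤ g) :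
    |deriv (deriv (φ · R)) ξ| ≤ 2 * (k * (k * g)) := by
  have hR' := right_mem_Icc.2 hR
  have hg0 : 0 ≤ g := (abs_nonneg _).trans (hg ξ hξ R hR')
  exact abs_deriv_deriv_le_of_abs_slope_slope_le hJ hξ (by positivity)
    fun ξ hξ ζ hζ η hη hζξ hηξ hζη => hk.abs_slope_slope_le hφ hg hξ hζ hη hζξ hηξ hζη hR'

end SpectralDerivatives

section General

variable {V θ θ' : ℝ → ℝ} {a M : ℝ} {φ φ' : ℝ → ℝ → ℝ} {ξ R : ℝ}

theorem VolterraBound.abs_derivs_le {J : Set ℝ} {B p q : ℝ} (hB : 1 ≤ B) (hp : 0 ≤ p)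
    (hk : VolterraBound V J R (2 * B * p)) (hJ : IsOpen J) (hξ : ξ ∈ J) (hR : 0 ≤ R)
    (hφ : ∀ ζ ∈ J, IsRegularSolution V ζ (φ ζ) (φ' ζ))
    (hq : ∀ ζ ∈ J, ∀ x ∈ Icc 0 R, |φ ζ x| ≤ 2 * B * q) :
    |deriv (φ · R) ξ| ≤ 16 * B ^ 3 * (p * q) ∧
      |deriv (deriv (φ · R)) ξ| ≤ 16 * B ^ 3 * (p ^ 2 * q) := by
  have hk0 : 0 ≤ 2 * B * p := by positivity
  have hq0 : 0 ≤ q :=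
    nonneg_of_mul_nonneg_right ((abs_nonneg _).trans (hq ξ hξ R (right_mem_Icc.2 hR)))
      (by linarith)
  constructor
  · calc |deriv (φ · R) ξ| ≤ 2 * B * p * (2 * B * q) := hk.abs_deriv_le hJ hξ hR hk0 hφ hq
      _ = 4 * B ^ 2 * (p * q) := by ring
      _ ≤ 16 * B ^ 3 * (p * q) := by gcongr <;> norm_num
  · calc |deriv (deriv (φ · R)) ξ| ≤ 2 * (2 * B * p * (2 * B * p * (2 * B * q))) :=
          hk.abs_deriv_deriv_le hJ hξ hR hk0 hφ hq
      _ = 16 * B ^ 3 * (p ^ 2 * q) := by ring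

theorem min_mul_min_le {a b c d : ℝ} (ha : 0 ≤ a) (hb : 0 ≤ b) (hc : 0 ≤ c) (hd : 0 ≤ d) :
    min a b * min c d ≤ min (a * c) (b * d) :=
  le_min (mul_le_mul (min_le_left a b) (min_le_left c d) (le_min hc hd) ha)
    (mul_le_mul (min_le_right a b) (min_le_right c d) (le_min hc hd) hb)

theorem IsResonance.abs_derivs_le_min (h : IsResonance V θ θ' a M)
    (hφ : ∀ ξ, 0 < ξ → IsRegularSolution V ξ (φ ξ) (φ' ξ)) (hξ : 0 < ξ) (hR : 0 ≤ R) :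
    (|deriv (φ · R) ξ| ≤ 16 * boundConst a M ^ 3 * min (R / ξ) (R ^ 3) ∧
      |deriv (deriv (φ · R)) ξ| ≤ 16 * boundConst a M ^ 3 * min (R ^ 2 / (ξ * √ξ)) (R ^ 5)) ∧
    |deriv (φ · R) ξ| ≤ 16 * boundConst a M ^ 3 * min (R / √ξ) (R ^ 2) ∧
      |deriv (deriv (φ · R)) ξ| ≤ 16 * boundConst a M ^ 3 * min (R ^ 2 / ξ) (R ^ 4) := by
  have hB := h.one_le_boundConst
  have hξJ : ξ ∈ Ioi (ξ / 4) := mem_Ioi.2 (by linarith)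
  have J_pos : ∀ ζ ∈ Ioi (ξ / 4), 0 < ζ := fun ζ hζ => by linarith [mem_Ioi.1 hζ]
  have φ_regular := fun ζ hζ => hφ ζ (J_pos ζ hζ)
  set p := min (R / √ξ) (R ^ 2)
  set q := min (1 / √ξ) R
  have p_sq_le : p ^ 2 ≤ min (R ^ 2 / ξ) (R ^ 4) := by
    refine (sq p).trans_le ((min_mul_min_le ?_ ?_ ?_ ?_).trans_eq ?_)
    any_goals positivity
    rw [← sq, ← sq, div_pow, Real.sq_sqrt hξ.le, ← pow_mul]
  have p_mul_q_le : p * q ≤ min (R / ξ) (R ^ 3) := by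
    refine (min_mul_min_le ?_ ?_ ?_ ?_).trans_eq ?_
    any_goals positivity
    rw [div_mul_div_comm, mul_one, Real.mul_self_sqrt hξ.le, ← pow_succ]
  have p_sq_mul_q_le : p ^ 2 * q ≤ min (R ^ 2 / (ξ * √ξ)) (R ^ 5) := by
    refine (mul_le_mul_of_nonneg_right p_sq_le (by positivity)).trans
      ((min_mul_min_le ?_ ?_ ?_ ?_).trans_eq ?_)
    any_goals positivity
    rw [div_mul_div_comm, mul_one, ← pow_succ]
  have bounds {r : ℝ} := (h.volterraBound_min hξ).abs_derivs_le (q := r) hB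
    (by positivity) isOpen_Ioi hξJ hR φ_regular
  obtain ⟨decay, decay'⟩ := bounds (r := q) fun ζ hζ x hx =>
    h.abs_le_two_mul_boundConst_mul_min hξ hζ (φ_regular ζ hζ) hx
  obtain ⟨bounded, bounded'⟩ := bounds (r := 1) fun ζ hζ x hx => by
    linarith [h.abs_le_boundConst (J_pos ζ hζ) (φ_regular ζ hζ) hx.1]
  rw [mul_one] at bounded bounded'
  have hC : 0 ≤ 16 * boundConst a M ^ 3 := by positivity
  exact ⟨⟨decay.trans (mul_le_mul_of_nonneg_left p_mul_q_le hC),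
    decay'.trans (mul_le_mul_of_nonneg_left p_sq_mul_q_le hC)⟩,
    bounded, bounded'.trans (mul_le_mul_of_nonneg_left p_sq_le hC)⟩

theorem generalized_eigenfunction_bounds_general (h : IsResonance V θ θ' a M)
    (hφ : ∀ ξ, 0 < ξ → IsRegularSolution V ξ (φ ξ) (φ' ξ)) :
    ∃ C : ℝ, 0 < C ∧ ∀ ξ, 0 < ξ → ∀ R, 0 < R →
      (|φ ξ R| ≤ C / √ξ ∧ |R * φ' ξ R| ≤ C * R ∧
        |deriv (φ · R) ξ| ≤ C * min (R / ξ) (R ^ 3) ∧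
        |deriv (deriv (φ · R)) ξ| ≤ C * min (R ^ 2 / (ξ * √ξ)) (R ^ 5)) ∧
      |deriv (φ · R) ξ| ≤ C * min (R / √ξ) (R ^ 2) ∧
        |deriv (deriv (φ · R)) ξ| ≤ C * min (R ^ 2 / ξ) (R ^ 4) := by
  have hB := h.one_le_boundConst
  have B_le : boundConst a M ≤ 16 * boundConst a M ^ 3 := by
    nlinarith [one_le_pow₀ (n := 2) hB]
  refine ⟨16 * boundConst a M ^ 3, by positivity, fun ξ hξ R hR => ?_⟩
  obtain ⟨decaying, bounded⟩ := h.abs_derivs_le_min hφ hξ hR.le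
  refine ⟨⟨?_, ?_, decaying⟩, bounded⟩
  · exact (h.abs_le_boundConst_div_sqrt hξ (hφ ξ hξ) hR.le).trans (by gcongr)
  · rw [abs_mul, abs_of_pos hR, mul_comm]
    gcongr
    exact (h.abs_deriv_le_boundConst hξ (hφ ξ hξ) hR.le).trans B_le

end General

/-- The Schrödinger potential `5 W ^ 4` of the linearization at the ground state
`W R = (1 + R ^ 2 / 3) ^ (-1 / 2)`. -/
def potential (R : ℝ) : ℝ := 5 / (1 + R ^ 2 / 3) ^ 2

/-- The zero-energy resonance: a multiple of `R ↦ R * (W R / 2 + R * W' R)`, the scaling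
derivative of `W` times `R`. -/
def resonance (R : ℝ) : ℝ := R * (R ^ 2 - 3) / √(R ^ 2 + 3) ^ 3

/-- The derivative of `resonance`. -/
def resonanceDeriv (R : ℝ) : ℝ := (15 * R ^ 2 - 9) / √(R ^ 2 + 3) ^ 5

theorem sq_sqrt_sq_add_three (R : ℝ) : √(R ^ 2 + 3) ^ 2 = R ^ 2 + 3 :=
  Real.sq_sqrt (by positivity)

theorem sqrt_sq_add_three_pow_four (R : ℝ) : √(R ^ 2 + 3) ^ 4 = (R ^ 2 + 3) ^ 2 := by
  rw [← congrArg (· ^ 2) (sq_sqrt_sq_add_three R), ← pow_mul]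

theorem hasDerivAt_sqrt_sq_add_three (R : ℝ) :
    HasDerivAt (fun R => √(R ^ 2 + 3)) (R / √(R ^ 2 + 3)) R := by
  refine (((hasDerivAt_pow 2 R).add_const 3).sqrt (by positivity)).congr_deriv ?_
  simp only [Nat.cast_ofNat, Nat.add_one_sub_one, pow_one]
  field_simp

theorem hasDerivAt_resonance (R : ℝ) : HasDerivAt resonance (resonanceDeriv R) R := by
  have hs : 0 < √(R ^ 2 + 3) := by positivity
  have hsq := sq_sqrt_sq_add_three R
  refine (((hasDerivAt_id R).mul ((hasDerivAt_pow 2 R).sub_const 3)).div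
    ((hasDerivAt_sqrt_sq_add_three R).pow 3) (pow_pos hs 3).ne').congr_deriv ?_
  simp only [resonanceDeriv, one_mul, id_eq, Nat.cast_ofNat, Nat.add_one_sub_one, pow_one,
    Pi.pow_apply, Pi.mul_apply]
  set s := √(R ^ 2 + 3)
  field_simp
  rw [show R ^ 2 = s ^ 2 - 3 by linarith]
  ring

theorem hasDerivAt_resonanceDeriv (R : ℝ) :
    HasDerivAt resonanceDeriv (-potential R * resonance R) R := by
  have hs : 0 < √(R ^ 2 + 3) := by positivity
  have hsq := sq_sqrt_sq_add_three R
  refine ((((hasDerivAt_pow 2 R).const_mul 15).sub_const 9).div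
    ((hasDerivAt_sqrt_sq_add_three R).pow 5) (pow_pos hs 5).ne').congr_deriv ?_
  have potential_eq : potential R = 45 / √(R ^ 2 + 3) ^ 4 := by
    rw [potential, sqrt_sq_add_three_pow_four]
    field_simp
    ring
  rw [potential_eq]
  simp only [resonance, Nat.cast_ofNat, Nat.add_one_sub_one, pow_one, Pi.pow_apply]
  set s := √(R ^ 2 + 3)
  field_simp
  rw [show R ^ 2 = s ^ 2 - 3 by linarith]
  ring

theorem abs_resonance_le_one (R : ℝ) : |resonance R| ≤ 1 := by
  have hsq := sq_sqrt_sq_add_three R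
  have abs_le_sqrt : |R| ≤ √(R ^ 2 + 3) := Real.abs_le_sqrt (by linarith)
  have abs_sq_sub_le : |R ^ 2 - 3| ≤ √(R ^ 2 + 3) ^ 2 := by
    rw [hsq, abs_le]
    constructor <;> linarith [sq_nonneg R]
  rw [resonance, abs_div, abs_mul, abs_of_nonneg (by positivity : 0 ≤ √(R ^ 2 + 3) ^ 3)]
  refine div_le_one_of_le₀ ?_ (by positivity)
  calc |R| * |R ^ 2 - 3| ≤ √(R ^ 2 + 3) * √(R ^ 2 + 3) ^ 2 := by gcongr
    _ = √(R ^ 2 + 3) ^ 3 := by ring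

theorem one_le_five_mul_resonance {R : ℝ} (hR : 3 ≤ R) : 1 ≤ 5 * resonance R := by
  have hsq := sq_sqrt_sq_add_three R
  have sqrt_le : √(R ^ 2 + 3) ≤ 4 / 3 * R :=
    Real.sqrt_le_iff.2 ⟨by linarith, by nlinarith⟩
  rw [resonance, ← mul_div_assoc, one_le_div (by positivity)]
  calc √(R ^ 2 + 3) ^ 3 = √(R ^ 2 + 3) * (R ^ 2 + 3) := by
        rw [pow_succ', hsq]
    _ ≤ 4 / 3 * R * (R ^ 2 + 3) := by gcongr
    _ = R * (4 / 3 * (R ^ 2 + 3)) := by ring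
    _ ≤ R * (5 * (R ^ 2 - 3)) := by gcongr R * ?_; nlinarith
    _ = 5 * (R * (R ^ 2 - 3)) := by ring

theorem resonanceDeriv_mem_Icc {R : ℝ} (hR : 3 ≤ R) : resonanceDeriv R ∈ Icc 0 5 := by
  have one_le_sqrt : 1 ≤ √(R ^ 2 + 3) := Real.one_le_sqrt.2 (by linarith [sq_nonneg R])
  refine ⟨div_nonneg (by nlinarith) (by positivity), ?_⟩
  rw [resonanceDeriv, div_le_iff₀ (by positivity)]
  calc 15 * R ^ 2 - 9 ≤ 5 * (R ^ 2 + 3) ^ 2 := by nlinarith [sq_nonneg R]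
    _ = 5 * √(R ^ 2 + 3) ^ 4 := by rw [sqrt_sq_add_three_pow_four]
    _ ≤ 5 * √(R ^ 2 + 3) ^ 5 := by gcongr; norm_num

theorem isResonance_resonance : IsResonance potential resonance resonanceDeriv 3 5 where
  solvesOn := ⟨fun R _ => (hasDerivAt_resonance R).hasDerivWithinAt, fun R _ =>
    (hasDerivAt_resonanceDeriv R).hasDerivWithinAt.congr_deriv (by simp)⟩
  map_zero := by simp [resonance]
  core_nonneg := by norm_num
  abs_potential_le R _ := by
    rw [potential, abs_of_nonneg (by positivity)]
    exact div_le_self (by norm_num) (one_le_pow₀ (by nlinarith [sq_nonneg R]))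
  abs_le R _ := (abs_resonance_le_one R).trans (by norm_num)
  one_le_mul _ := one_le_five_mul_resonance
  deriv_mem _ := resonanceDeriv_mem_Icc

theorem isRegularSolution_of_deriv_eq {V u : ℝ → ℝ} {ξ : ℝ} (hu0 : u 0 = 0)
    (hu0' : deriv u 0 = 1) (hu : ∀ R, HasDerivAt u (deriv u R) R)
    (hu' : ∀ R, HasDerivAt (deriv u) (deriv (deriv u) R) R)
    (ode : ∀ R, -deriv (deriv u) R - V R * u R = ξ * u R) :
    IsRegularSolution V ξ u (deriv u) :=
  ⟨⟨fun R _ => (hu R).hasDerivWithinAt, fun R _ => (hu' R).hasDerivWithinAt.congr_deriv (by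
    simp only [Pi.zero_apply]; linarith [ode R])⟩, hu0, hu0'⟩

/-- Pointwise bounds on the regular solution `φ(R,ξ)` of `𝓛φ = ξφ`, `φ(0,ξ)=0`,
`∂_Rφ(0,ξ)=1`, and on its first and second `ξ`-derivatives. -/
theorem generalized_eigenfunction_bounds
    (φ : ℝ → ℝ → ℝ)
    (hφ : ∀ ξ : ℝ,
      φ ξ 0 = 0 ∧ deriv (φ ξ) 0 = 1 ∧
      (∀ R : ℝ, HasDerivAt (φ ξ) (deriv (φ ξ) R) R) ∧
      (∀ R : ℝ, HasDerivAt (deriv (φ ξ)) (deriv (deriv (φ ξ)) R) R) ∧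
      (∀ R : ℝ, - deriv (deriv (φ ξ)) R - (5 / (1 + R ^ 2 / 3) ^ 2) * φ ξ R = ξ * φ ξ R)) :
    ∃ C : ℝ, 0 < C ∧
      (∀ ξ : ℝ, 1 < ξ → ∀ R : ℝ, 0 < R →
        |φ ξ R| ≤ C / Real.sqrt ξ ∧
        |R * deriv (φ ξ) R| ≤ C * R ∧
        |deriv (fun ζ => φ ζ R) ξ| ≤ C * min (R / ξ) (R ^ 3) ∧
        |deriv (fun ζ => deriv (fun ζ' => φ ζ' R) ζ) ξ|
          ≤ C * min (R ^ 2 / (ξ * Real.sqrt ξ)) (R ^ 5)) ∧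
      (∀ ξ : ℝ, 0 < ξ → ξ < 1 → ∀ R : ℝ, 0 < R →
        |deriv (fun ζ => φ ζ R) ξ| ≤ C * min (R / Real.sqrt ξ) (R ^ 2) ∧
        |deriv (fun ζ => deriv (fun ζ' => φ ζ' R) ζ) ξ| ≤ C * min (R ^ 2 / ξ) (R ^ 4)) := by
  have regular : ∀ ξ, 0 < ξ → IsRegularSolution potential ξ (φ ξ) (deriv (φ ξ)) := fun ξ _ => by
    obtain ⟨map_zero, deriv_zero, hasDeriv, hasDeriv', ode⟩ := hφ ξ
    exact isRegularSolution_of_deriv_eq map_zero deriv_zero hasDeriv hasDeriv' ode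
  obtain ⟨C, hC, bounds⟩ := generalized_eigenfunction_bounds_general isResonance_resonance regular
  exact ⟨C, hC, fun ξ hξ R hR => (bounds ξ (one_pos.trans hξ) R hR).1,
    fun ξ hξ _ R hR => (bounds ξ hξ R hR).2⟩

end EigenfunctionBounds
end
end
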